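/- Let (t_k) be a sequence of positive reals with t_k → 0, and for each k let (x^k,y^k) be a nondegenerate Karush–Kuhn–Tucker point of the Scholtes-type regularization S(t_k), all with the same quadratic index m. Suppose (x^k,y^k) → (x̄,ȳ), where (x̄,ȳ) is a nondegenerate T-stationary point of the regularized continuous reformulation R with (unique) multipliers (λ̄,μ̄,σ̄,ϱ̄) which additionally satisfies NDT6, i.e. σ̄_{1,i} ≠ 0 for all i ∈ a01(x̄,ȳ). Then the T-index of (x̄,ȳ) equals m: TI = m. -/

import Mathlib

open scoped Classical
open Finset Filter Topology

noncomputable section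
namespace Scholtes

/-- Vectors in ℝⁿ. -/
abbrev Vec (n : ℕ) := Fin n → ℝ

variable {n : ℕ} {P Q : Type*} [Fintype P] [Fintype Q]

/-- Euclidean dot product. -/
def dot (u v : Vec n) : ℝ := ∑ i, u i * v i

/-- Gradient: vector of partial derivatives. -/
def grad (f : Vec n → ℝ) (x : Vec n) : Vec n := fun i => fderiv ℝ f x (Pi.single i 1)

/-- Hessian bilinear form of `L` at `z`, evaluated at directions `ξ`, `ζ`. -/
def hess (L : Vec n × Vec n → ℝ) (z ξ ζ : Vec n × Vec n) : ℝ :=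
  fderiv ℝ (fun w => fderiv ℝ L w ξ) z ζ

/-- The pair vector (e_i, 0) ∈ ℝ²ⁿ. -/
def ex (i : Fin n) : Vec n × Vec n := (Pi.single i 1, 0)

/-- The pair vector (0, e_i) ∈ ℝ²ⁿ. -/
def ey (i : Fin n) : Vec n × Vec n := (0, Pi.single i 1)

/-- The pair vector (0, e) ∈ ℝ²ⁿ, where e is the all-ones vector. -/
def eAll : Vec n × Vec n := (0, fun _ => 1)

/-- The pair vector (y_i e_i, x_i e_i) ∈ ℝ²ⁿ. -/
def hvec (x y : Vec n) (i : Fin n) : Vec n × Vec n := (Pi.single i (y i), Pi.single i (x i))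

/-- The number of negative eigenvalues of the bilinear form `B` restricted to the
(sub)space `T`, expressed as the maximal dimension of a linear subspace of `T` on
which the associated quadratic form is negative definite. -/
def negIndex (B : (Vec n × Vec n) → (Vec n × Vec n) → ℝ) (T : (Vec n × Vec n) → Prop) : ℕ :=
  sSup {d : ℕ | ∃ W : Submodule ℝ (Vec n × Vec n),
    (∀ ξ ∈ W, T ξ) ∧ Module.finrank ℝ W = d ∧ ∀ ξ ∈ W, ξ ≠ 0 → B ξ ξ < 0}

/-- The data and standing assumptions of the paper: objective `f`, equality
constraints `h`, inequality constraints `g`, positive pairwise different linear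
coefficients `c`, cardinality bound `s` and regularization parameter `ε`. -/
structure Setting (n : ℕ) (P Q : Type*) [Fintype P] [Fintype Q] where
  f : Vec n → ℝ
  h : P → Vec n → ℝ
  g : Q → Vec n → ℝ
  c : Vec n
  s : ℕ
  ε : ℝ
  hn : 1 ≤ n
  hf : ContDiff ℝ 2 f
  hh : ∀ p, ContDiff ℝ 2 (h p)
  hg : ∀ q, ContDiff ℝ 2 (g q)
  hcpos : ∀ i, 0 < c i
  hcinj : Function.Injective c
  hs : s < n
  hεpos : 0 < ε
  hεle : ε ≤ 1 / ((n : ℝ) - s)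

/-- Index set a01: x̄_i = 0, ȳ_i > 0. -/
def a01 (x y : Vec n) : Finset (Fin n) := univ.filter fun i => x i = 0 ∧ 0 < y i

/-- Index set a10: x̄_i ≠ 0, ȳ_i = 0. -/
def a10 (x y : Vec n) : Finset (Fin n) := univ.filter fun i => x i ≠ 0 ∧ y i = 0

/-- Index set a00: x̄_i = 0, ȳ_i = 0. -/
def a00 (x y : Vec n) : Finset (Fin n) := univ.filter fun i => x i = 0 ∧ y i = 0

/-- Index set N(y): y_i = 0. -/
def Nact (y : Vec n) : Finset (Fin n) := univ.filter fun i => y i = 0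

/-- Index set H≥(x,y): x_i y_i = −t. -/
def Hge (t : ℝ) (x y : Vec n) : Finset (Fin n) := univ.filter fun i => x i * y i = -t

/-- Index set H≤(x,y): x_i y_i = t. -/
def Hle (t : ℝ) (x y : Vec n) : Finset (Fin n) := univ.filter fun i => x i * y i = t

/-- Index set H(x,y) = H≥ ∪ H≤. -/
def Hact (t : ℝ) (x y : Vec n) : Finset (Fin n) := Hge t x y ∪ Hle t x y

/-- Active inequality constraints Q0(x). -/
def Q0 (D : Setting n P Q) (x : Vec n) : Finset Q := univ.filter fun q => D.g q x = 0

/-- Active upper bounds E(y): y_i = 1 + ε. -/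
def Eact (D : Setting n P Q) (y : Vec n) : Finset (Fin n) := univ.filter fun i => y i = 1 + D.ε

/-- Index set O(x,y) = complement of E(y) ∪ N(y) ∪ H(x,y). -/
def Oact (D : Setting n P Q) (t : ℝ) (x y : Vec n) : Finset (Fin n) :=
  (Eact D y ∪ Nact y ∪ Hact t x y)ᶜ

/-- Feasibility for the regularized continuous reformulation R. -/
def feasR (D : Setting n P Q) (x y : Vec n) : Prop :=
  (∀ p, D.h p x = 0) ∧ (∀ q, 0 ≤ D.g q x) ∧ ((n : ℝ) - D.s ≤ ∑ i, y i) ∧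
  (∀ i, x i * y i = 0) ∧ (∀ i, 0 ≤ y i ∧ y i ≤ 1 + D.ε)

/-- Feasibility for the Scholtes-type regularization S(t). -/
def feasS (D : Setting n P Q) (t : ℝ) (x y : Vec n) : Prop :=
  (∀ p, D.h p x = 0) ∧ (∀ q, 0 ≤ D.g q x) ∧ ((n : ℝ) - D.s ≤ ∑ i, y i) ∧
  (∀ i, -t ≤ x i * y i ∧ x i * y i ≤ t) ∧ (∀ i, 0 ≤ y i ∧ y i ≤ 1 + D.ε)

/-- Multipliers for T-stationarity (defined on the whole index ranges). -/
structure TMult (n : ℕ) (P Q : Type*) where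
  lam : P → ℝ
  mu1 : Q → ℝ
  mu2 : Fin n → ℝ
  mu3 : ℝ
  sig1 : Fin n → ℝ
  sig2 : Fin n → ℝ
  rho1 : Fin n → ℝ
  rho2 : Fin n → ℝ

/-- The T-stationarity equation (1) of Definition 2. -/
def TStatEq (D : Setting n P Q) (x y : Vec n) (M : TMult n P Q) : Prop :=
  ((grad D.f x, D.c) : Vec n × Vec n) =
    (∑ p, M.lam p • ((grad (D.h p) x, (0 : Vec n)) : Vec n × Vec n))
    + (∑ q ∈ Q0 D x, M.mu1 q • ((grad (D.g q) x, (0 : Vec n)) : Vec n × Vec n))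
    - (∑ i ∈ Eact D y, M.mu2 i • ey i)
    + M.mu3 • eAll
    + (∑ i ∈ a01 x y, M.sig1 i • ex i)
    + (∑ i ∈ a10 x y, M.sig2 i • ey i)
    + (∑ i ∈ a00 x y, (M.rho1 i • ex i + M.rho2 i • ey i))

/-- (x,y) is a T-stationary point of R with multipliers M. -/
def TStatAt (D : Setting n P Q) (x y : Vec n) (M : TMult n P Q) : Prop :=
  feasR D x y ∧
  (∀ q ∈ Q0 D x, 0 ≤ M.mu1 q) ∧
  (∀ i ∈ Eact D y, 0 ≤ M.mu2 i) ∧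
  0 ≤ M.mu3 ∧
  M.mu3 * ((∑ i, y i) - ((n : ℝ) - D.s)) = 0 ∧
  (∀ i ∈ a00 x y, M.rho1 i = 0 ∨ M.rho2 i ≤ 0) ∧
  TStatEq D x y M

/-- (x,y) is a T-stationary point of R. -/
def TStat (D : Setting n P Q) (x y : Vec n) : Prop := ∃ M, TStatAt D x y M

/-- MPOC-tailored LICQ at a feasible point (x,y) of R: the indicated family of
vectors in ℝ²ⁿ is linearly independent. -/
def MPOC_LICQ (D : Setting n P Q) (x y : Vec n) : Prop :=
  ∀ (lam : P → ℝ) (mu1 : Q → ℝ) (mu2 : Fin n → ℝ) (mu3 : ℝ) (s1 s2 : Fin n → ℝ),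
    ((∑ i, y i) ≠ (n : ℝ) - D.s → mu3 = 0) →
    (∑ p, lam p • ((grad (D.h p) x, (0 : Vec n)) : Vec n × Vec n))
    + (∑ q ∈ Q0 D x, mu1 q • ((grad (D.g q) x, (0 : Vec n)) : Vec n × Vec n))
    + (∑ i ∈ Eact D y, mu2 i • ey i)
    + mu3 • eAll
    + (∑ i ∈ a01 x y ∪ a00 x y, s1 i • ex i)
    + (∑ i ∈ a10 x y ∪ a00 x y, s2 i • ey i) = 0 →
    (∀ p, lam p = 0) ∧ (∀ q ∈ Q0 D x, mu1 q = 0) ∧ (∀ i ∈ Eact D y, mu2 i = 0) ∧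
    mu3 = 0 ∧ (∀ i ∈ a01 x y ∪ a00 x y, s1 i = 0) ∧ (∀ i ∈ a10 x y ∪ a00 x y, s2 i = 0)

/-- The Lagrange function L^R associated with the T-stationary point (x̄,ȳ)
and multipliers M. -/
def LagR (D : Setting n P Q) (xb yb : Vec n) (M : TMult n P Q) (z : Vec n × Vec n) : ℝ :=
  D.f z.1 + dot D.c z.2
    - (∑ p, M.lam p * D.h p z.1)
    - (∑ q ∈ Q0 D xb, M.mu1 q * D.g q z.1)
    + (∑ i ∈ Eact D yb, M.mu2 i * (z.2 i - (1 + D.ε)))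
    - M.mu3 * ((∑ i, z.2 i) - ((n : ℝ) - D.s))
    - (∑ i ∈ a01 xb yb, M.sig1 i * z.1 i)
    - (∑ i ∈ a10 xb yb, M.sig2 i * z.2 i)
    - (∑ i ∈ a00 xb yb, (M.rho1 i * z.1 i + M.rho2 i * z.2 i))

/-- Membership in the tangent space T^R at (x̄,ȳ). -/
def inTR (D : Setting n P Q) (x y : Vec n) (ξ : Vec n × Vec n) : Prop :=
  (∀ p, dot (grad (D.h p) x) ξ.1 = 0) ∧
  (∀ q ∈ Q0 D x, dot (grad (D.g q) x) ξ.1 = 0) ∧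
  (∀ i ∈ Eact D y, ξ.2 i = 0) ∧
  ((∑ i, y i) = (n : ℝ) - D.s → (∑ i, ξ.2 i) = 0) ∧
  (∀ i ∈ a00 x y ∪ a01 x y, ξ.1 i = 0) ∧
  (∀ i ∈ a00 x y ∪ a10 x y, ξ.2 i = 0)

/-- Nondegenerate T-stationary point with multipliers M (NDT1–NDT4). -/
def NondegTStatAt (D : Setting n P Q) (x y : Vec n) (M : TMult n P Q) : Prop :=
  TStatAt D x y M ∧
  MPOC_LICQ D x y ∧
  (∀ q ∈ Q0 D x, 0 < M.mu1 q) ∧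
  (∀ i ∈ Eact D y, 0 < M.mu2 i) ∧
  ((∑ i, y i) = (n : ℝ) - D.s → 0 < M.mu3) ∧
  (∀ i ∈ a00 x y, M.rho1 i ≠ 0 ∧ M.rho2 i < 0) ∧
  (∀ ξ, inTR D x y ξ → (∀ ζ, inTR D x y ζ → hess (LagR D x y M) (x, y) ξ ζ = 0) → ξ = 0)

/-- T-index: quadratic index (number of negative eigenvalues of the restricted
Hessian of L^R) plus the biactive index |a00|. -/
def TIndex (D : Setting n P Q) (x y : Vec n) (M : TMult n P Q) : ℕ :=
  negIndex (hess (LagR D x y M) (x, y)) (inTR D x y) + (a00 x y).card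

/-- Multipliers for KKT points of S(t) (defined on the whole index ranges). -/
structure SMult (n : ℕ) (P Q : Type*) where
  lam : P → ℝ
  mu1 : Q → ℝ
  mu2 : Fin n → ℝ
  mu3 : ℝ
  etaGe : Fin n → ℝ
  etaLe : Fin n → ℝ
  nu : Fin n → ℝ

/-- The KKT equation for S(t). -/
def KKTEq (D : Setting n P Q) (t : ℝ) (x y : Vec n) (M : SMult n P Q) : Prop :=
  ((grad D.f x, D.c) : Vec n × Vec n) =
    (∑ p, M.lam p • ((grad (D.h p) x, (0 : Vec n)) : Vec n × Vec n))
    + (∑ q ∈ Q0 D x, M.mu1 q • ((grad (D.g q) x, (0 : Vec n)) : Vec n × Vec n))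
    - (∑ i ∈ Eact D y, M.mu2 i • ey i)
    + M.mu3 • eAll
    + (∑ i ∈ Hge t x y, M.etaGe i • hvec x y i)
    - (∑ i ∈ Hle t x y, M.etaLe i • hvec x y i)
    + (∑ i ∈ Nact y, M.nu i • ey i)

/-- (x,y) is a KKT point of S(t) with multipliers M. -/
def KKTAt (D : Setting n P Q) (t : ℝ) (x y : Vec n) (M : SMult n P Q) : Prop :=
  feasS D t x y ∧
  (∀ q ∈ Q0 D x, 0 ≤ M.mu1 q) ∧
  (∀ i ∈ Eact D y, 0 ≤ M.mu2 i) ∧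
  0 ≤ M.mu3 ∧
  M.mu3 * ((∑ i, y i) - ((n : ℝ) - D.s)) = 0 ∧
  (∀ i ∈ Hge t x y, 0 ≤ M.etaGe i) ∧
  (∀ i ∈ Hle t x y, 0 ≤ M.etaLe i) ∧
  (∀ i ∈ Nact y, 0 ≤ M.nu i) ∧
  KKTEq D t x y M

/-- (x,y) is a KKT point of S(t). -/
def KKT (D : Setting n P Q) (t : ℝ) (x y : Vec n) : Prop := ∃ M, KKTAt D t x y M

/-- LICQ at a feasible point (x,y) of S(t). -/
def LICQ (D : Setting n P Q) (t : ℝ) (x y : Vec n) : Prop :=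
  ∀ (lam : P → ℝ) (mu1 : Q → ℝ) (mu2 : Fin n → ℝ) (mu3 : ℝ) (eta nu : Fin n → ℝ),
    ((∑ i, y i) ≠ (n : ℝ) - D.s → mu3 = 0) →
    (∑ p, lam p • ((grad (D.h p) x, (0 : Vec n)) : Vec n × Vec n))
    + (∑ q ∈ Q0 D x, mu1 q • ((grad (D.g q) x, (0 : Vec n)) : Vec n × Vec n))
    + (∑ i ∈ Eact D y, mu2 i • ey i)
    + mu3 • eAll
    + (∑ i ∈ Hact t x y, eta i • hvec x y i)
    + (∑ i ∈ Nact y, nu i • ey i) = 0 →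
    (∀ p, lam p = 0) ∧ (∀ q ∈ Q0 D x, mu1 q = 0) ∧ (∀ i ∈ Eact D y, mu2 i = 0) ∧
    mu3 = 0 ∧ (∀ i ∈ Hact t x y, eta i = 0) ∧ (∀ i ∈ Nact y, nu i = 0)

/-- The Lagrange function L^S associated with the KKT point (x̄,ȳ) of S(t)
and multipliers M. -/
def LagS (D : Setting n P Q) (t : ℝ) (xb yb : Vec n) (M : SMult n P Q)
    (z : Vec n × Vec n) : ℝ :=
  D.f z.1 + dot D.c z.2
    - (∑ p, M.lam p * D.h p z.1)
    - (∑ q ∈ Q0 D xb, M.mu1 q * D.g q z.1)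
    + (∑ i ∈ Eact D yb, M.mu2 i * (z.2 i - (1 + D.ε)))
    - M.mu3 * ((∑ i, z.2 i) - ((n : ℝ) - D.s))
    - (∑ i ∈ Hge t xb yb, M.etaGe i * (z.1 i * z.2 i + t))
    + (∑ i ∈ Hle t xb yb, M.etaLe i * (z.1 i * z.2 i - t))
    - (∑ i ∈ Nact yb, M.nu i * z.2 i)

/-- Membership in the tangent space T^S at (x,y) for S(t). -/
def inTS (D : Setting n P Q) (t : ℝ) (x y : Vec n) (ξ : Vec n × Vec n) : Prop :=
  (∀ p, dot (grad (D.h p) x) ξ.1 = 0) ∧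
  (∀ q ∈ Q0 D x, dot (grad (D.g q) x) ξ.1 = 0) ∧
  (∀ i ∈ Eact D y, ξ.2 i = 0) ∧
  ((∑ i, y i) = (n : ℝ) - D.s → (∑ i, ξ.2 i) = 0) ∧
  (∀ i ∈ Hact t x y, y i * ξ.1 i + x i * ξ.2 i = 0) ∧
  (∀ i ∈ Nact y, ξ.2 i = 0)

/-- Nondegenerate KKT point of S(t) with multipliers M (ND1–ND3). -/
def NondegKKTAt (D : Setting n P Q) (t : ℝ) (x y : Vec n) (M : SMult n P Q) : Prop :=
  KKTAt D t x y M ∧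
  LICQ D t x y ∧
  (∀ q ∈ Q0 D x, 0 < M.mu1 q) ∧
  (∀ i ∈ Eact D y, 0 < M.mu2 i) ∧
  (∀ i ∈ Hge t x y, 0 < M.etaGe i) ∧
  (∀ i ∈ Hle t x y, 0 < M.etaLe i) ∧
  (∀ i ∈ Nact y, 0 < M.nu i) ∧
  ((∑ i, y i) = (n : ℝ) - D.s → 0 < M.mu3) ∧
  (∀ ξ, inTS D t x y ξ → (∀ ζ, inTS D t x y ζ → hess (LagS D t x y M) (x, y) ξ ζ = 0) → ξ = 0)

/-- Quadratic index of a KKT point of S(t): number of negative eigenvalues of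
the restricted Hessian of L^S. -/
def QIdx (D : Setting n P Q) (t : ℝ) (x y : Vec n) (M : SMult n P Q) : ℕ :=
  negIndex (hess (LagS D t x y M) (x, y)) (inTS D t x y)

set_option linter.unusedSectionVars false

/-- A symmetric bilinear form that is nondegenerate on `T` splits `T`, up to dimension, into a
negative definite and a positive definite part. -/
theorem exists_negDef_posDef {V : Type*} [AddCommGroup V] [Module ℝ V] [FiniteDimensional ℝ V]
    (B : LinearMap.BilinForm ℝ V) (hB : ∀ ξ ζ, B ξ ζ = B ζ ξ) (T : Submodule ℝ V)
    (hT : ∀ ξ ∈ T, (∀ ζ ∈ T, B ξ ζ = 0) → ξ = 0) :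
    ∃ R S : Submodule ℝ V, R ≤ T ∧ S ≤ T ∧
      Module.finrank ℝ R + Module.finrank ℝ S = Module.finrank ℝ T ∧
      (∀ ξ ∈ R, ξ ≠ 0 → B ξ ξ < 0) ∧ (∀ ξ ∈ S, ξ ≠ 0 → 0 < B ξ ξ) := by
  set q : QuadraticForm ℝ T := (LinearMap.BilinMap.toQuadraticMap B).restrict T with hq
  have hqa : ∀ x : T, q x = B x x := fun x => rfl
  have hrad : q.radical = ⊥ := by
    rw [Submodule.eq_bot_iff]
    intro x hx
    have h := QuadraticMap.mem_radical_iff'.mp hx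
    apply Subtype.ext
    refine hT x x.2 fun ζ hζ => ?_
    have h1 := h.2 ⟨ζ, hζ⟩
    have h2 := h.1
    rw [hqa] at h1 h2
    rw [hqa] at h1
    simp only [Submodule.coe_add, map_add, LinearMap.add_apply] at h1
    have := hB ζ x
    linarith
  have hs := QuadraticForm.sigPos_add_sigNeg_add_radical (Q := q)
  rw [hrad, finrank_bot, add_zero] at hs
  obtain ⟨A, hA, hA'⟩ := exists_finrank_eq_sigPos_and_posDef q
  obtain ⟨C, hC, hC'⟩ := exists_finrank_eq_sigNeg_and_negDef q
  refine ⟨C.map T.subtype, A.map T.subtype, Submodule.map_subtype_le _ _,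
    Submodule.map_subtype_le _ _, ?_, ?_, ?_⟩
  · rw [Submodule.finrank_map_subtype_eq, Submodule.finrank_map_subtype_eq, hA, hC]
    omega
  · rintro _ ⟨x, hx, rfl⟩ h0
    have h := hC' ⟨x, hx⟩ (by
      intro h
      apply h0
      simpa using congrArg (fun z : C => ((z : T) : V)) h)
    have h' : 0 < -(B x x) := h
    simpa using h'
  · rintro _ ⟨x, hx, rfl⟩ h0
    exact hA' ⟨x, hx⟩ (by
      intro h
      apply h0
      simpa using congrArg (fun z : A => ((z : T) : V)) h)

/-- Along an ultrafilter, subspaces of dimension at least `r` accumulate at a subspace of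
dimension `r`. -/
theorem exists_limit_submodule_inner {ι E : Type*} [NormedAddCommGroup E] [InnerProductSpace ℝ E]
    [FiniteDimensional ℝ E] (l : Ultrafilter ι) (W : ι → Submodule ℝ E) (r : ℕ)
    (hr : ∀ k, r ≤ Module.finrank ℝ (W k)) :
    ∃ U : Submodule ℝ E, Module.finrank ℝ U = r ∧
      ∀ w ∈ U, ∃ u : ι → E, (∀ k, u k ∈ W k) ∧ Tendsto u l (𝓝 w) := by
  let e : ι → Fin r → E := fun k j =>
    (stdOrthonormalBasis ℝ (W k) (Fin.castLE (hr k) j) : E)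
  have he : ∀ k, Orthonormal ℝ (e k) := fun k =>
    ((stdOrthonormalBasis ℝ (W k)).orthonormal.comp _ (Fin.castLE_injective (hr k))).comp_linearIsometry
      (W k).subtypeₗᵢ
  have hb : ∀ j, ∃ v : E, Tendsto (fun k => e k j) l (𝓝 v) := by
    intro j
    obtain ⟨v, -, hv⟩ := (isCompact_closedBall (0 : E) 1).ultrafilter_le_nhds
      (l.map fun k => e k j) (by
        rw [le_principal_iff]
        refine Filter.mem_map.mpr (Filter.univ_mem' fun k => ?_)
        simp [(he k).1 j])
    exact ⟨v, hv⟩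
  choose v hv using hb
  have hvo : Orthonormal ℝ v := by
    rw [orthonormal_iff_ite]
    intro i j
    refine tendsto_nhds_unique ((hv i).inner (hv j)) ?_
    simp only [fun k => orthonormal_iff_ite.mp (he k) i j]
    exact tendsto_const_nhds
  refine ⟨Submodule.span ℝ (Set.range v), ?_, ?_⟩
  · rw [finrank_span_eq_card hvo.linearIndependent, Fintype.card_fin]
  · intro w hw
    obtain ⟨a, rfl⟩ := (Submodule.mem_span_range_iff_exists_fun ℝ).mp hw
    refine ⟨fun k => ∑ j, a j • e k j, fun k => ?_, ?_⟩
    · exact Submodule.sum_mem _ fun j _ => Submodule.smul_mem _ _ (SetLike.coe_mem _)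
    · exact tendsto_finsetSum _ fun j _ => (hv j).const_smul (a j)

theorem exists_limit_submodule {ι V : Type*} [NormedAddCommGroup V] [NormedSpace ℝ V]
    [FiniteDimensional ℝ V] (l : Ultrafilter ι) (W : ι → Submodule ℝ V) (r : ℕ)
    (hr : ∀ᶠ k in l, r ≤ Module.finrank ℝ (W k)) :
    ∃ U : Submodule ℝ V, Module.finrank ℝ U = r ∧
      ∀ w ∈ U, ∃ u : ι → V, (∀ᶠ k in l, u k ∈ W k) ∧ Tendsto u l (𝓝 w) := by
  have hrV : r ≤ Module.finrank ℝ V := by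
    obtain ⟨k, hk⟩ := hr.exists
    exact hk.trans (Submodule.finrank_le _)
  let e := toEuclidean (E := V)
  let W' : ι → Submodule ℝ (EuclideanSpace ℝ (Fin (Module.finrank ℝ V))) := fun k =>
    if r ≤ Module.finrank ℝ (W k) then (W k).map e.toLinearEquiv.toLinearMap else ⊤
  obtain ⟨U, hU, hU'⟩ := exists_limit_submodule_inner l W' r (by
    intro k
    by_cases h : r ≤ Module.finrank ℝ (W k)
    · rw [show W' k = (W k).map e.toLinearEquiv.toLinearMap from if_pos h]
      rwa [LinearEquiv.finrank_map_eq]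
    · rw [show W' k = ⊤ from if_neg h]
      simpa using hrV)
  refine ⟨U.map e.symm.toLinearEquiv.toLinearMap, ?_, ?_⟩
  · rw [LinearEquiv.finrank_map_eq, hU]
  · rintro _ ⟨w, hw, rfl⟩
    obtain ⟨u, hu, hu'⟩ := hU' w hw
    refine ⟨fun k => e.symm (u k), ?_, (e.symm.continuous.tendsto w).comp hu'⟩
    filter_upwards [hr] with k hk
    have h := hu k
    simp only [W', if_pos hk] at h
    obtain ⟨x, hx, hxe⟩ := h
    rw [← hxe]
    simpa using hx

/-- Coefficients with respect to a perturbed linearly independent family converge. -/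
theorem tendsto_coeff {ι J F : Type*} [NormedAddCommGroup F] [NormedSpace ℝ F]
    [FiniteDimensional ℝ F] (l : Filter ι) (S : Finset J) (v : J → F) (vk : ι → J → F)
    (hv : ∀ j ∈ S, Tendsto (fun k => vk k j) l (𝓝 (v j)))
    (hli : ∀ a : J → ℝ, ∑ j ∈ S, a j • v j = 0 → ∀ j ∈ S, a j = 0)
    (a : J → ℝ) (ak : ι → J → ℝ)
    (hak : Tendsto (fun k => ∑ j ∈ S, ak k j • vk k j) l (𝓝 (∑ j ∈ S, a j • v j))) :
    ∀ j ∈ S, Tendsto (fun k => ak k j) l (𝓝 (a j)) := by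
  let comb : (S → F) →ₗ[ℝ] ((S → ℝ) →L[ℝ] F) :=
    { toFun := fun v => ∑ j : S, (ContinuousLinearMap.proj j).smulRight (v j)
      map_add' := by
        intro x y
        ext b
        simp [Finset.sum_add_distrib]
      map_smul' := by
        intro c x
        ext b
        simp [Finset.smul_sum, smul_comm c] }
  have hcomb : ∀ (v : S → F) (b : S → ℝ), comb v b = ∑ j : S, b j • v j := by
    intro v b
    simp [comb]
  set A := comb (fun j => v j) with hA
  have hinj : LinearMap.ker (A : (S → ℝ) →ₗ[ℝ] F) = ⊥ := by
    rw [LinearMap.ker_eq_bot']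
    intro b hb
    have h : A b = 0 := hb
    rw [hA, hcomb] at h
    ext j
    have := hli (fun j => if h : j ∈ S then b ⟨j, h⟩ else 0) (by
      rw [← Finset.sum_coe_sort]
      simpa using h) j j.2
    simpa using this
  obtain ⟨L, hL⟩ := LinearMap.exists_leftInverse_of_injective _ hinj
  let L' : F →L[ℝ] (S → ℝ) := LinearMap.toContinuousLinearMap L
  have hLA : L'.comp A = 1 := by
    ext1 b
    exact LinearMap.congr_fun hL b
  have hAk : Tendsto (fun k => L'.comp (comb (fun j => vk k j))) l
      (𝓝 (1 : (S → ℝ) →L[ℝ] (S → ℝ))) := by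
    rw [← hLA]
    have h1 : Continuous fun v : S → F => L'.comp (comb v) :=
      (ContinuousLinearMap.compL ℝ (S → ℝ) F (S → ℝ) L').continuous.comp
        (LinearMap.continuous_of_finiteDimensional comb)
    exact (h1.tendsto _).comp (tendsto_pi_nhds.mpr fun j => hv j j.2)
  have hinv := (NormedRing.inverse_continuousAt (1 : ((S → ℝ) →L[ℝ] (S → ℝ))ˣ)).tendsto.comp hAk
  rw [Ring.inverse_unit] at hinv
  have hunit : ∀ᶠ k in l, IsUnit (L'.comp (comb (fun j => vk k j))) :=
    hAk.eventually (Units.nhds (1 : ((S → ℝ) →L[ℝ] (S → ℝ))ˣ))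
  have hbk : Tendsto (fun k => L' (∑ j ∈ S, ak k j • vk k j)) l (𝓝 (fun j : S => a j)) := by
    have h1 : L' (∑ j ∈ S, a j • v j) = fun j : S => a j := by
      have := congrArg (fun M : (S → ℝ) →L[ℝ] (S → ℝ) => M fun j => a j) hLA
      simp only [ContinuousLinearMap.comp_apply, hA, hcomb, one_apply_eq_self] at this
      rw [← this, ← Finset.sum_coe_sort]
    rw [← h1]
    exact (L'.continuous.tendsto _).comp hak
  have hlim := (isBoundedBilinearMap_apply (𝕜 := ℝ) (E := S → ℝ) (F := S → ℝ)).continuous.tendsto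
    (((1 : ((S → ℝ) →L[ℝ] (S → ℝ))ˣ)⁻¹ : ((S → ℝ) →L[ℝ] (S → ℝ))ˣ), fun j : S => a j) |>.comp
    (hinv.prodMk_nhds hbk)
  have hfin : Tendsto (fun k => fun j : S => ak k j) l (𝓝 (fun j : S => a j)) := by
    have h2 : ((((1 : ((S → ℝ) →L[ℝ] (S → ℝ))ˣ)⁻¹ : ((S → ℝ) →L[ℝ] (S → ℝ))ˣ) :
        (S → ℝ) →L[ℝ] (S → ℝ)) fun j : S => a j) = fun j : S => a j := by simp
    dsimp only at hlim
    rw [h2] at hlim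
    refine hlim.congr' ?_
    filter_upwards [hunit] with k hk
    simp only [Function.comp_apply]
    have h3 : L' (∑ j ∈ S, ak k j • vk k j) =
        (L'.comp (comb fun j => vk k j)) (fun j : S => ak k j) := by
      rw [ContinuousLinearMap.comp_apply, hcomb, ← Finset.sum_coe_sort]
    rw [h3, ← mul_apply_eq_comp, Ring.inverse_mul_cancel _ hk]
    rfl
  intro j hj
  exact (tendsto_pi_nhds.mp hfin) ⟨j, hj⟩

/-- The common kernel of a finite family of functionals has codimension at most the cardinality. -/
theorem finrank_le_finrank_add_card {J V : Type*} [AddCommGroup V] [Module ℝ V]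
    [FiniteDimensional ℝ V] (S : Finset J) (φ : J → Module.Dual ℝ V) (T : Submodule ℝ V)
    (hT : ∀ ξ, (∀ j ∈ S, φ j ξ = 0) → ξ ∈ T) :
    Module.finrank ℝ V ≤ Module.finrank ℝ T + S.card := by
  have h := Subspace.finrank_add_finrank_dualCoannihilator_eq
    (Submodule.span ℝ ((S.image φ : Finset (Module.Dual ℝ V)) : Set (Module.Dual ℝ V)))
  have h1 := finrank_span_finset_le_card (R := ℝ) (S.image φ)
  have h2 : (S.image φ).card ≤ S.card := Finset.card_image_le
  have h3 : (Submodule.span ℝ ((S.image φ : Finset (Module.Dual ℝ V)) :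
      Set (Module.Dual ℝ V))).dualCoannihilator ≤ T := by
    intro ξ hξ
    refine hT ξ fun j hj => ?_
    rw [Submodule.mem_dualCoannihilator] at hξ
    exact hξ _ (Submodule.subset_span (by simpa using ⟨j, hj, rfl⟩))
  have h4 := Submodule.finrank_mono h3
  have h5 : (↑(S.image φ) : Set (Module.Dual ℝ V)).finrank ℝ ≤ (S.image φ).card := h1
  simp only [Set.finrank] at h5
  omega

/-- The common kernel of linearly independent functionals has codimension the cardinality. -/
theorem finrank_add_card_le {J V : Type*} [AddCommGroup V] [Module ℝ V]
    [FiniteDimensional ℝ V] (S : Finset J) (φ : J → Module.Dual ℝ V) (T : Submodule ℝ V)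
    (hT : ∀ ξ ∈ T, ∀ j ∈ S, φ j ξ = 0)
    (hli : ∀ a : J → ℝ, ∑ j ∈ S, a j • φ j = 0 → ∀ j ∈ S, a j = 0) :
    Module.finrank ℝ T + S.card ≤ Module.finrank ℝ V := by
  have hLI : LinearIndependent ℝ fun j : S => φ j := by
    rw [Fintype.linearIndependent_iff]
    intro g hg j
    have := hli (fun j => if h : j ∈ S then g ⟨j, h⟩ else 0) (by
      rw [← Finset.sum_coe_sort]
      simpa using hg) j j.2
    simpa using this
  have h := Subspace.finrank_add_finrank_dualCoannihilator_eq
    (Submodule.span ℝ (Set.range fun j : S => φ j))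
  rw [finrank_span_eq_card hLI, Fintype.card_coe] at h
  have h3 : T ≤ (Submodule.span ℝ (Set.range fun j : S => φ j)).dualCoannihilator := by
    intro ξ hξ
    rw [Submodule.mem_dualCoannihilator]
    intro ψ hψ
    induction hψ using Submodule.span_induction with
    | mem x hx =>
      obtain ⟨j, rfl⟩ := hx
      exact hT ξ hξ j j.2
    | zero => rfl
    | add x y _ _ hx hy => simp [hx, hy]
    | smul a x _ hx => simp [hx]
  have h4 := Submodule.finrank_mono h3
  omega

/-- Extension by zero of a multiplier vector given on `S`. -/
def zext {α : Type*} (S : Finset α) (a : α → ℝ) : α → ℝ := fun i => if i ∈ S then a i else 0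

theorem zext_apply {α : Type*} (S : Finset α) (a : α → ℝ) (i : α) [Decidable (i ∈ S)] :
    zext S a i = if i ∈ S then a i else 0 := by
  unfold zext
  congr

/-- The signed multiplier of the constraints `-t ≤ x_i y_i ≤ t`. -/
def eta (t : ℝ) (x y : Vec n) (M : SMult n P Q) : Vec n :=
  zext (Hge t x y) M.etaGe - zext (Hle t x y) M.etaLe

/-- The multiplier of `(e_i, 0)` at a T-stationary point. -/
def multX (x y : Vec n) (M : TMult n P Q) : Vec n :=
  zext (a01 x y) M.sig1 + zext (a00 x y) M.rho1

/-- The multiplier of `(0, e_i)` at a T-stationary point. -/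
def multY (x y : Vec n) (M : TMult n P Q) : Vec n :=
  zext (a10 x y) M.sig2 + zext (a00 x y) M.rho2

theorem KKTEq.fst {D : Setting n P Q} {t : ℝ} {x y : Vec n} {M : SMult n P Q}
    (h : KKTEq D t x y M) (i : Fin n) :
    grad D.f x i = ∑ p, M.lam p * grad (D.h p) x i
      + ∑ q ∈ Q0 D x, M.mu1 q * grad (D.g q) x i + eta t x y M i * y i := by
  have := congrFun (congrArg Prod.fst h) i
  simpa [Prod.fst_sum, ex, ey, eAll, hvec, Pi.single_apply, eta, zext_apply, sub_mul, add_sub_assoc,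
    ite_mul, Finset.sum_apply] using this

theorem KKTEq.snd {D : Setting n P Q} {t : ℝ} {x y : Vec n} {M : SMult n P Q}
    (h : KKTEq D t x y M) (i : Fin n) :
    D.c i = -zext (Eact D y) M.mu2 i + M.mu3 + eta t x y M i * x i + zext (Nact y) M.nu i := by
  have := congrFun (congrArg Prod.snd h) i
  simpa [Prod.snd_sum, ex, ey, eAll, hvec, Pi.single_apply, eta, zext_apply, sub_mul, add_sub_assoc,
    ite_mul, Finset.sum_apply] using this

theorem TStatEq.fst {D : Setting n P Q} {x y : Vec n} {M : TMult n P Q}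
    (h : TStatEq D x y M) (i : Fin n) :
    grad D.f x i = ∑ p, M.lam p * grad (D.h p) x i
      + ∑ q ∈ Q0 D x, M.mu1 q * grad (D.g q) x i + multX x y M i := by
  have := congrFun (congrArg Prod.fst h) i
  simpa [Prod.fst_sum, ex, ey, eAll, Pi.single_apply, multX, zext_apply, add_assoc,
    ite_mul, Finset.sum_apply] using this

theorem TStatEq.snd {D : Setting n P Q} {x y : Vec n} {M : TMult n P Q}
    (h : TStatEq D x y M) (i : Fin n) :
    D.c i = -zext (Eact D y) M.mu2 i + M.mu3 + multY x y M i := by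
  have := congrFun (congrArg Prod.snd h) i
  simpa [Prod.snd_sum, ex, ey, eAll, Pi.single_apply, multY, zext_apply, add_assoc,
    ite_mul, Finset.sum_apply] using this

/-- Index type for the constraint gradients: equalities, inequalities, upper bounds, the
cardinality constraint, and two vectors for each coordinate. -/
abbrev ConIdx (n : ℕ) (P Q : Type*) := P ⊕ Q ⊕ Fin n ⊕ Unit ⊕ Fin n ⊕ Fin n

/-- Finite sets of constraint indices, given blockwise. -/
def conSet (S : Finset Q) (E A B : Finset (Fin n)) : Finset (ConIdx n P Q) :=
  univ.disjSum (S.disjSum (E.disjSum (univ.disjSum (A.disjSum B))))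

/-- The family of constraint gradients at `x`, with given vectors in the last two blocks. -/
def conFam (D : Setting n P Q) (x : Vec n) (u w : Fin n → Vec n × Vec n) :
    ConIdx n P Q → Vec n × Vec n :=
  Sum.elim (fun p => (grad (D.h p) x, 0)) <| Sum.elim (fun q => (grad (D.g q) x, 0)) <|
    Sum.elim ey <| Sum.elim (fun _ => eAll) <| Sum.elim u w

/-- A coefficient vector on the constraint indices, given blockwise. -/
def conCoeff (lam : P → ℝ) (mu1 : Q → ℝ) (mu2 : Fin n → ℝ) (mu3 : ℝ) (a b : Fin n → ℝ) :
    ConIdx n P Q → ℝ :=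
  Sum.elim lam <| Sum.elim mu1 <| Sum.elim mu2 <| Sum.elim (fun _ => mu3) <| Sum.elim a b

theorem sum_conSet {F : Type*} [AddCommMonoid F] (S : Finset Q) (E A B : Finset (Fin n))
    (φ : ConIdx n P Q → F) :
    ∑ j ∈ conSet S E A B, φ j = ∑ p, φ (.inl p) + (∑ q ∈ S, φ (.inr (.inl q))
      + (∑ i ∈ E, φ (.inr (.inr (.inl i))) + (φ (.inr (.inr (.inr (.inl ()))))
      + (∑ i ∈ A, φ (.inr (.inr (.inr (.inr (.inl i)))))
      + ∑ i ∈ B, φ (.inr (.inr (.inr (.inr (.inr i))))))))) := by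
  simp [conSet, Finset.sum_disjSum]

theorem card_conSet (S : Finset Q) (E A B : Finset (Fin n)) :
    (conSet S E A B : Finset (ConIdx n P Q)).card =
      Fintype.card P + (S.card + (E.card + (1 + (A.card + B.card)))) := by
  simp [conSet, Finset.card_disjSum]

/-- The index set of the gradients in MPOC-LICQ when the cardinality constraint is active. -/
def mpocSet (D : Setting n P Q) (x y : Vec n) : Finset (ConIdx n P Q) :=
  conSet (Q0 D x) (Eact D y) (a01 x y ∪ a00 x y) (a10 x y ∪ a00 x y)

theorem MPOC_LICQ.coeff_eq_zero {D : Setting n P Q} {x y : Vec n} (h : MPOC_LICQ D x y)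
    (hsum : ∑ i, y i = (n : ℝ) - D.s) (a : ConIdx n P Q → ℝ)
    (ha : ∑ j ∈ mpocSet D x y, a j • conFam D x ex ey j = 0) :
    ∀ j ∈ mpocSet D x y, a j = 0 := by
  rw [mpocSet, sum_conSet] at ha
  obtain ⟨h1, h2, h3, h4, h5, h6⟩ := h (fun p => a (.inl p)) (fun q => a (.inr (.inl q)))
    (fun i => a (.inr (.inr (.inl i)))) (a (.inr (.inr (.inr (.inl ())))))
    (fun i => a (.inr (.inr (.inr (.inr (.inl i))))))
    (fun i => a (.inr (.inr (.inr (.inr (.inr i)))))) (fun h => absurd hsum h)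
    (by simpa [conFam, add_assoc] using ha)
  rintro (p | q | i | u | i | i) hj
  · exact h1 p
  · exact h2 q (by simpa [mpocSet, conSet] using hj)
  · exact h3 i (by simpa [mpocSet, conSet] using hj)
  · exact h4
  · exact h5 i (by simpa [mpocSet, conSet] using hj)
  · exact h6 i (by simpa [mpocSet, conSet] using hj)

/-- The pairing of ℝ²ⁿ with itself given by the dot product. -/
def pairing : (Vec n × Vec n) →ₗ[ℝ] Module.Dual ℝ (Vec n × Vec n) :=
  LinearMap.mk₂ ℝ (fun v ξ => dot v.1 ξ.1 + dot v.2 ξ.2)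
    (by intros; simp only [dot, Prod.fst_add, Prod.snd_add, Pi.add_apply, add_mul,
          Finset.sum_add_distrib]; ring)
    (by intros; simp only [dot, Prod.smul_fst, Prod.smul_snd, Pi.smul_apply, smul_eq_mul,
          mul_add, Finset.mul_sum, mul_assoc])
    (by intros; simp only [dot, Prod.fst_add, Prod.snd_add, Pi.add_apply, mul_add,
          Finset.sum_add_distrib]; ring)
    (by intros; simp only [dot, Prod.smul_fst, Prod.smul_snd, Pi.smul_apply, smul_eq_mul,
          mul_add, Finset.mul_sum, mul_left_comm])

theorem pairing_apply (v ξ : Vec n × Vec n) : pairing v ξ = dot v.1 ξ.1 + dot v.2 ξ.2 := rfl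

theorem pairing_injective {v : Vec n × Vec n} (h : pairing v = 0) : v = 0 := by
  refine Prod.ext (funext fun i => ?_) (funext fun i => ?_)
  · simpa [pairing_apply, dot, ex, Pi.single_apply] using LinearMap.congr_fun h (ex i)
  · simpa [pairing_apply, dot, ey, Pi.single_apply] using LinearMap.congr_fun h (ey i)

/-- The tangent space `T^R` as a subspace. -/
def tangentR (D : Setting n P Q) (x y : Vec n) : Submodule ℝ (Vec n × Vec n) where
  carrier := {ξ | inTR D x y ξ}
  zero_mem' := by simp [inTR, dot]
  add_mem' := by
    rintro a b ⟨h1, h2, h3, h4, h5, h6⟩ ⟨k1, k2, k3, k4, k5, k6⟩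
    simp only [dot] at *
    refine ⟨fun p => ?_, fun q hq => ?_, fun i hi => ?_, fun h => ?_, fun i hi => ?_,
      fun i hi => ?_⟩
    · simp [dot, mul_add, Finset.sum_add_distrib, h1, k1]
    · simp [dot, mul_add, Finset.sum_add_distrib, h2 q hq, k2 q hq]
    · simp [h3 i hi, k3 i hi]
    · simp [Finset.sum_add_distrib, h4 h, k4 h]
    · simp [h5 i hi, k5 i hi]
    · simp [h6 i hi, k6 i hi]
  smul_mem' := by
    rintro c a ⟨h1, h2, h3, h4, h5, h6⟩
    simp only [dot] at *
    refine ⟨fun p => ?_, fun q hq => ?_, fun i hi => ?_, fun h => ?_, fun i hi => ?_,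
      fun i hi => ?_⟩
    · simp [dot, mul_left_comm _ c, ← Finset.mul_sum, h1]
    · simp [dot, mul_left_comm _ c, ← Finset.mul_sum, h2 q hq]
    · simp [h3 i hi]
    · simp [← Finset.mul_sum, h4 h]
    · simp [h5 i hi]
    · simp [h6 i hi]

/-- The tangent space `T^S` as a subspace. -/
def tangentS (D : Setting n P Q) (t : ℝ) (x y : Vec n) : Submodule ℝ (Vec n × Vec n) where
  carrier := {ξ | inTS D t x y ξ}
  zero_mem' := by simp [inTS, dot]
  add_mem' := by
    rintro a b ⟨h1, h2, h3, h4, h5, h6⟩ ⟨k1, k2, k3, k4, k5, k6⟩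
    simp only [dot] at *
    refine ⟨fun p => ?_, fun q hq => ?_, fun i hi => ?_, fun h => ?_, fun i hi => ?_,
      fun i hi => ?_⟩
    · simp [dot, mul_add, Finset.sum_add_distrib, h1, k1]
    · simp [dot, mul_add, Finset.sum_add_distrib, h2 q hq, k2 q hq]
    · simp [h3 i hi, k3 i hi]
    · simp [Finset.sum_add_distrib, h4 h, k4 h]
    · simp only [Prod.fst_add, Prod.snd_add, Pi.add_apply]
      linear_combination h5 i hi + k5 i hi
    · simp [h6 i hi, k6 i hi]
  smul_mem' := by
    rintro c a ⟨h1, h2, h3, h4, h5, h6⟩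
    simp only [dot] at *
    refine ⟨fun p => ?_, fun q hq => ?_, fun i hi => ?_, fun h => ?_, fun i hi => ?_,
      fun i hi => ?_⟩
    · simp [dot, mul_left_comm _ c, ← Finset.mul_sum, h1]
    · simp [dot, mul_left_comm _ c, ← Finset.mul_sum, h2 q hq]
    · simp [h3 i hi]
    · simp [← Finset.mul_sum, h4 h]
    · simp only [Prod.smul_fst, Prod.smul_snd, Pi.smul_apply, smul_eq_mul]
      linear_combination c * h5 i hi
    · simp [h6 i hi]

theorem finrank_tangentR_add_card_le {D : Setting n P Q} {x y : Vec n} (h : MPOC_LICQ D x y)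
    (hsum : ∑ i, y i = (n : ℝ) - D.s) :
    Module.finrank ℝ (tangentR D x y) + (mpocSet D x y).card ≤
      Module.finrank ℝ (Vec n × Vec n) := by
  refine finrank_add_card_le _ (fun j => pairing (conFam D x ex ey j)) _ ?_ ?_
  · rintro ξ ⟨h1, h2, h3, h4, h5, h6⟩ (p | q | i | u | i | i) hj
    · simpa [pairing_apply, conFam, dot] using h1 p
    · simpa [pairing_apply, conFam, dot] using h2 q (by simpa [mpocSet, conSet] using hj)
    · simpa [pairing_apply, conFam, dot, ey, Pi.single_apply] using
        h3 i (by simpa [mpocSet, conSet] using hj)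
    · simpa [pairing_apply, conFam, dot, eAll] using h4 hsum
    · simpa [pairing_apply, conFam, dot, ex, Pi.single_apply] using
        h5 i (by simpa [mpocSet, conSet, or_comm] using hj)
    · simpa [pairing_apply, conFam, dot, ey, Pi.single_apply] using
        h6 i (by simpa [mpocSet, conSet, or_comm] using hj)
  · intro a ha
    refine h.coeff_eq_zero hsum a (pairing_injective ?_)
    simpa [map_sum] using ha

theorem finrank_le_finrank_tangentS_add (D : Setting n P Q) (t : ℝ) (x y : Vec n) :
    Module.finrank ℝ (Vec n × Vec n) ≤ Module.finrank ℝ (tangentS D t x y) +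
      (conSet (Q0 D x) (Eact D y) (Hact t x y) (Nact y) : Finset (ConIdx n P Q)).card := by
  refine finrank_le_finrank_add_card _ (fun j => pairing (conFam D x (hvec x y) ey j)) _ ?_
  intro ξ h
  refine ⟨fun p => ?_, fun q hq => ?_, fun i hi => ?_, fun _ => ?_, fun i hi => ?_,
    fun i hi => ?_⟩
  · simpa [pairing_apply, conFam, dot] using h (.inl p) (by simp [conSet])
  · simpa [pairing_apply, conFam, dot] using h (.inr (.inl q)) (by simpa [conSet] using hq)
  · simpa [pairing_apply, conFam, dot, ey, Pi.single_apply] using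
      h (.inr (.inr (.inl i))) (by simpa [conSet] using hi)
  · simpa [pairing_apply, conFam, dot, eAll] using
      h (.inr (.inr (.inr (.inl ())))) (by simp [conSet])
  · simpa [pairing_apply, conFam, dot, hvec, Pi.single_apply] using
      h (.inr (.inr (.inr (.inr (.inl i))))) (by simpa [conSet] using hi)
  · simpa [pairing_apply, conFam, dot, ey, Pi.single_apply] using
      h (.inr (.inr (.inr (.inr (.inr i))))) (by simpa [conSet] using hi)

theorem mem_a01 {x y : Vec n} {i : Fin n} : i ∈ a01 x y ↔ x i = 0 ∧ 0 < y i := by simp [a01]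

theorem mem_a10 {x y : Vec n} {i : Fin n} : i ∈ a10 x y ↔ x i ≠ 0 ∧ y i = 0 := by simp [a10]

theorem mem_a00 {x y : Vec n} {i : Fin n} : i ∈ a00 x y ↔ x i = 0 ∧ y i = 0 := by simp [a00]

theorem mem_Hact {t : ℝ} {x y : Vec n} {i : Fin n} :
    i ∈ Hact t x y ↔ x i * y i = -t ∨ x i * y i = t := by simp [Hact, Hge, Hle]

theorem mem_Nact {y : Vec n} {i : Fin n} : i ∈ Nact y ↔ y i = 0 := by simp [Nact]

theorem mem_Eact {D : Setting n P Q} {y : Vec n} {i : Fin n} :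
    i ∈ Eact D y ↔ y i = 1 + D.ε := by simp [Eact]

theorem mem_Q0 {D : Setting n P Q} {x : Vec n} {q : Q} : q ∈ Q0 D x ↔ D.g q x = 0 := by simp [Q0]

theorem eta_eq_zero {t : ℝ} {x y : Vec n} {M : SMult n P Q} {i : Fin n} (h : i ∉ Hact t x y) :
    eta t x y M i = 0 := by
  simp only [Hact, Finset.mem_union, not_or] at h
  simp [eta, zext_apply, h.1, h.2]

theorem mem_of_zext_ne_zero {α : Type*} {S : Finset α} {a : α → ℝ} {i : α} (h : zext S a i ≠ 0) :
    i ∈ S := by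
  by_contra hi
  exact h (if_neg hi)

/-- A feasible point of R splits the coordinates into the three index sets. -/
theorem feasR.cases {D : Setting n P Q} {x y : Vec n} (h : feasR D x y) (i : Fin n) :
    i ∈ a01 x y ∨ i ∈ a10 x y ∨ i ∈ a00 x y := by
  obtain ⟨-, -, -, hxy, hy⟩ := h
  rw [mem_a01, mem_a10, mem_a00]
  rcases (hy i).1.lt_or_eq with h | h
  · exact .inl ⟨(mul_eq_zero.mp (hxy i)).resolve_right h.ne', h⟩
  · by_cases hx : x i = 0
    · exact .inr (.inr ⟨hx, h.symm⟩)
    · exact .inr (.inl ⟨hx, h.symm⟩)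

theorem sum_conCoeff_smul_conFam (D : Setting n P Q) (x : Vec n) (S : Finset Q)
    (E A B : Finset (Fin n)) (lam : P → ℝ) (mu1 : Q → ℝ) (mu2 : Fin n → ℝ) (mu3 : ℝ)
    (a b r r' : Fin n → ℝ) :
    ∑ j ∈ conSet S E A B, conCoeff lam mu1 mu2 mu3 a b j •
        conFam D x (fun i => ex i + r i • ey i) (fun i => ey i + r' i • ex i) j =
      ((fun i => ∑ p, lam p * grad (D.h p) x i + ∑ q ∈ S, mu1 q * grad (D.g q) x i
          + zext A a i + zext B b i * r' i),
        fun i => zext E mu2 i + mu3 + zext A a i * r i + zext B b i) := by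
  rw [sum_conSet]
  refine Prod.ext (funext fun i => ?_) (funext fun i => ?_)
  · simp [conCoeff, conFam, ex, ey, eAll, Prod.fst_sum, Pi.single_apply, Finset.sum_apply,
      zext_apply, ite_mul, add_assoc]
  · simp [conCoeff, conFam, ex, ey, eAll, Prod.snd_sum, Pi.single_apply, Finset.sum_apply,
      zext_apply, ite_mul, add_assoc]

theorem sum_zext_mul {α : Type*} {S T : Finset α} (hST : S ⊆ T) (a b : α → ℝ) :
    ∑ q ∈ T, zext S a q * b q = ∑ q ∈ S, a q * b q := by
  simp only [zext, ite_mul, zero_mul]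
  rw [← Finset.sum_filter]
  congr 1
  ext q
  simpa using fun h => hST h

theorem not_mem_a10_a00_of_mem_a01 {x y : Vec n} {i : Fin n} (h : i ∈ a01 x y) :
    i ∉ a10 x y ∧ i ∉ a00 x y := by
  rw [mem_a01] at h
  rw [mem_a10, mem_a00]
  exact ⟨fun h' => h.2.ne' h'.2, fun h' => h.2.ne' h'.2⟩

theorem not_mem_a01_a00_of_mem_a10 {x y : Vec n} {i : Fin n} (h : i ∈ a10 x y) :
    i ∉ a01 x y ∧ i ∉ a00 x y := by
  rw [mem_a10] at h
  rw [mem_a01, mem_a00]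
  exact ⟨fun h' => h.1 h'.1, fun h' => h.1 h'.1⟩

theorem not_mem_a01_a10_of_mem_a00 {x y : Vec n} {i : Fin n} (h : i ∈ a00 x y) :
    i ∉ a01 x y ∧ i ∉ a10 x y := by
  rw [mem_a00] at h
  rw [mem_a01, mem_a10]
  exact ⟨fun h' => h'.2.ne' h.2, fun h' => h'.1 h.1⟩

theorem TStatEq.combination {D : Setting n P Q} {x y : Vec n} {M : TMult n P Q}
    (h : TStatEq D x y M) :
    ∑ j ∈ mpocSet D x y, conCoeff M.lam (zext (Q0 D x) M.mu1) (-zext (Eact D y) M.mu2) M.mu3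
      (multX x y M) (multY x y M) j • conFam D x ex ey j = (grad D.f x, D.c) := by
  have := sum_conCoeff_smul_conFam D x (Q0 D x) (Eact D y) (a01 x y ∪ a00 x y)
    (a10 x y ∪ a00 x y) M.lam (zext (Q0 D x) M.mu1) (-zext (Eact D y) M.mu2) M.mu3
    (multX x y M) (multY x y M) 0 0
  simp only [Pi.zero_apply, zero_smul, add_zero, mul_zero] at this
  rw [mpocSet, this]
  refine Prod.ext (funext fun i => ?_) (funext fun i => ?_)
  · simp only [h.fst i, sum_zext_mul subset_rfl]
    congr 1
    by_cases hi : i ∈ a01 x y ∪ a00 x y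
    · simp [zext_apply, hi]
    · rw [Finset.mem_union, not_or] at hi
      simp [zext_apply, multX, hi]
  · simp only [h.snd i]
    congr 2
    · by_cases hi : i ∈ Eact D y <;> simp [zext_apply, hi]
    · by_cases hi : i ∈ a10 x y ∪ a00 x y
      · simp [zext_apply, hi]
      · rw [Finset.mem_union, not_or] at hi
        simp [zext_apply, multY, hi]

theorem KKTEq.combination {D : Setting n P Q} {t : ℝ} {x y xb yb : Vec n} {M : SMult n P Q}
    (h : KKTEq D t x y M) (hfeas : feasR D xb yb) (hQ : Q0 D x ⊆ Q0 D xb)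
    (hE : Eact D y ⊆ Eact D yb) (h01 : ∀ i ∈ a01 xb yb, y i ≠ 0)
    (h10 : ∀ i ∈ a10 xb yb, x i ≠ 0) :
    ∑ j ∈ mpocSet D xb yb, conCoeff M.lam (zext (Q0 D x) M.mu1) (-zext (Eact D y) M.mu2) M.mu3
      (fun i => eta t x y M i * y i) (fun i => eta t x y M i * x i + zext (Nact y) M.nu i) j •
      conFam D x (fun i => ex i + zext (a01 xb yb) (x / y) i • ey i)
        (fun i => ey i + zext (a10 xb yb) (y / x) i • ex i) j = (grad D.f x, D.c) := by
  rw [mpocSet, sum_conCoeff_smul_conFam]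
  have hν : ∀ i, zext (Nact y) M.nu i * y i = 0 := by
    intro i
    by_cases hi : y i = 0
    · simp [hi]
    · simp [zext_apply, mem_Nact, hi]
  refine Prod.ext (funext fun i => ?_) (funext fun i => ?_)
  · simp only [h.fst i, sum_zext_mul hQ, add_assoc]
    congr 2
    rcases hfeas.cases i with hi | hi | hi
    · simp [zext_apply, hi, not_mem_a10_a00_of_mem_a01 hi]
    · have hx := h10 i hi
      have := hν i
      simp only [zext_apply _ _ i, hi, Finset.mem_union, not_mem_a01_a00_of_mem_a10 hi, or_false,
        if_false, if_true, Pi.div_apply] at this ⊢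
      field_simp
      linear_combination this
    · simp [zext_apply, hi, not_mem_a01_a10_of_mem_a00 hi]
  · simp only [h.snd i]
    have h1 : zext (Eact D yb) (-zext (Eact D y) M.mu2) i = -zext (Eact D y) M.mu2 i := by
      by_cases hi : i ∈ Eact D y
      · simp [zext_apply, hi, hE hi]
      · simp [zext_apply, hi]
    rw [h1]
    simp only [add_assoc]
    congr 2
    rcases hfeas.cases i with hi | hi | hi
    · have hy := h01 i hi
      simp only [zext_apply _ _ i, hi, Finset.mem_union, not_mem_a10_a00_of_mem_a01 hi, or_false,
        if_false, if_true, Pi.div_apply, mem_Nact, hy]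
      field_simp
    · simp [zext_apply, hi, not_mem_a01_a00_of_mem_a10 hi]
    · simp [zext_apply, hi, not_mem_a01_a10_of_mem_a00 hi]

theorem continuous_grad {F : Vec n → ℝ} (hF : ContDiff ℝ 2 F) : Continuous (grad F) :=
  continuous_pi fun _ => (hF.continuous_fderiv (by norm_num)).clm_apply continuous_const

/-- At a T-stationary point the cardinality constraint is active. -/
theorem TStatAt.sum_eq {D : Setting n P Q} {x y : Vec n} {M : TMult n P Q}
    (h : TStatAt D x y M) : ∑ i, y i = (n : ℝ) - D.s := by
  obtain ⟨hfeas, -, hmu2, -, hmu3, -, heq⟩ := h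
  by_contra hne
  have h3 : M.mu3 = 0 := (mul_eq_zero.mp hmu3).resolve_right (sub_ne_zero.mpr hne)
  have hpos : 0 < ∑ i, y i := by
    have : (D.s : ℝ) < n := by exact_mod_cast D.hs
    linarith [hfeas.2.2.1]
  obtain ⟨i, -, hi⟩ := Finset.exists_lt_of_sum_lt (s := univ) (f := fun _ : Fin n => (0 : ℝ))
    (g := y) (by simpa using hpos)
  have hyi := hfeas.cases i
  rw [mem_a10, mem_a00] at hyi
  have hi01 : i ∈ a01 x y := by
    rcases hyi with h | h | h
    · exact h
    · exact absurd h.2 hi.ne'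
    · exact absurd h.2 hi.ne'
  have h4 := heq.snd i
  have h5 : multY x y M i = 0 := by
    simp [multY, zext_apply, not_mem_a10_a00_of_mem_a01 hi01]
  have h6 : 0 ≤ zext (Eact D y) M.mu2 i := by
    rw [zext_apply]
    split_ifs with h
    · exact hmu2 i h
    · exact le_rfl
  linarith [D.hcpos i]

section Limit
variable {ι : Type*} {l : Filter ι} {D : Setting n P Q} {t : ι → ℝ} {X Y : ι → Vec n}
  {M : ι → SMult n P Q} {xb yb : Vec n} {Mb : TMult n P Q}

theorem eventually_Q0_subset (hX : Tendsto X l (𝓝 xb)) :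
    ∀ᶠ k in l, Q0 D (X k) ⊆ Q0 D xb := by
  have : ∀ q ∉ Q0 D xb, ∀ᶠ k in l, q ∉ Q0 D (X k) := by
    intro q hq
    rw [mem_Q0] at hq
    have h := (((D.hg q).continuous.tendsto xb).comp hX).eventually_ne hq
    filter_upwards [h] with k hk
    rwa [mem_Q0]
  have h2 : ∀ᶠ k in l, ∀ q, q ∉ Q0 D xb → q ∉ Q0 D (X k) :=
    eventually_all.mpr fun q => by
      by_cases hq : q ∈ Q0 D xb
      · simp [hq]
      · filter_upwards [this q hq] with k hk _ using hk
  filter_upwards [h2] with k hk q hq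
  by_contra hn
  exact hk q hn hq

theorem eventually_Eact_subset (hY : Tendsto Y l (𝓝 yb)) :
    ∀ᶠ k in l, Eact D (Y k) ⊆ Eact D yb := by
  have h2 : ∀ᶠ k in l, ∀ i, i ∉ Eact D yb → i ∉ Eact D (Y k) :=
    eventually_all.mpr fun i => by
      by_cases hi : i ∈ Eact D yb
      · simp [hi]
      · rw [mem_Eact] at hi
        filter_upwards [(tendsto_pi_nhds.mp hY i).eventually_ne hi] with k hk _
        rwa [mem_Eact]
  filter_upwards [h2] with k hk q hq
  by_contra hn
  exact hk q hn hq

theorem multipliers_tendsto (hX : Tendsto X l (𝓝 xb)) (hY : Tendsto Y l (𝓝 yb))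
    (hK : ∀ k, KKTEq D (t k) (X k) (Y k) (M k)) (hT : TStatAt D xb yb Mb)
    (hL : MPOC_LICQ D xb yb) :
    (∀ p, Tendsto (fun k => (M k).lam p) l (𝓝 (Mb.lam p))) ∧
    (∀ q, Tendsto (fun k => zext (Q0 D (X k)) (M k).mu1 q) l (𝓝 (zext (Q0 D xb) Mb.mu1 q))) ∧
    (∀ i ∈ Eact D yb, Tendsto (fun k => zext (Eact D (Y k)) (M k).mu2 i) l (𝓝 (Mb.mu2 i))) ∧
    Tendsto (fun k => (M k).mu3) l (𝓝 Mb.mu3) ∧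
    (∀ i ∈ a01 xb yb ∪ a00 xb yb,
      Tendsto (fun k => eta (t k) (X k) (Y k) (M k) i * Y k i) l (𝓝 (multX xb yb Mb i))) ∧
    (∀ i ∈ a10 xb yb ∪ a00 xb yb,
      Tendsto (fun k => eta (t k) (X k) (Y k) (M k) i * X k i + zext (Nact (Y k)) (M k).nu i) l
        (𝓝 (multY xb yb Mb i))) := by
  have hXi := fun i => tendsto_pi_nhds.mp hX i
  have hYi := fun i => tendsto_pi_nhds.mp hY i
  have h01 : ∀ᶠ k in l, ∀ i, i ∈ a01 xb yb → Y k i ≠ 0 := eventually_all.mpr fun i => by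
    by_cases hi : i ∈ a01 xb yb
    · filter_upwards [(hYi i).eventually_ne (mem_a01.mp hi).2.ne'] with k hk _ using hk
    · simp [hi]
  have h10 : ∀ᶠ k in l, ∀ i, i ∈ a10 xb yb → X k i ≠ 0 := eventually_all.mpr fun i => by
    by_cases hi : i ∈ a10 xb yb
    · filter_upwards [(hXi i).eventually_ne (mem_a10.mp hi).1] with k hk _ using hk
    · simp [hi]
  have hgrad : ∀ {F : Vec n → ℝ}, ContDiff ℝ 2 F →
      Tendsto (fun k => grad F (X k)) l (𝓝 (grad F xb)) := fun hF =>
    ((continuous_grad hF).tendsto xb).comp hX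
  have hr01 : ∀ i, Tendsto (fun k => zext (a01 xb yb) (X k / Y k) i) l (𝓝 0) := by
    intro i
    by_cases hi : i ∈ a01 xb yb
    · have : Tendsto (fun k => X k i / Y k i) l (𝓝 (xb i / yb i)) :=
        (hXi i).div (hYi i) (mem_a01.mp hi).2.ne'
      simpa [zext_apply, hi, (mem_a01.mp hi).1] using this
    · simpa [zext_apply, hi] using tendsto_const_nhds
  have hr10 : ∀ i, Tendsto (fun k => zext (a10 xb yb) (Y k / X k) i) l (𝓝 0) := by
    intro i
    by_cases hi : i ∈ a10 xb yb
    · have : Tendsto (fun k => Y k i / X k i) l (𝓝 (yb i / xb i)) :=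
        (hYi i).div (hXi i) (mem_a10.mp hi).1
      simpa [zext_apply, hi, (mem_a10.mp hi).2] using this
    · simpa [zext_apply, hi] using tendsto_const_nhds
  have key := tendsto_coeff l (mpocSet D xb yb) (conFam D xb ex ey)
    (fun k => conFam D (X k) (fun i => ex i + zext (a01 xb yb) (X k / Y k) i • ey i)
      (fun i => ey i + zext (a10 xb yb) (Y k / X k) i • ex i)) (by
      rintro (p | q | i | u | i | i) -
      · exact (hgrad (D.hh p)).prodMk_nhds tendsto_const_nhds
      · exact (hgrad (D.hg q)).prodMk_nhds tendsto_const_nhds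
      · exact tendsto_const_nhds
      · exact tendsto_const_nhds
      · simpa [conFam] using ((hr01 i).smul_const (ey i)).const_add (ex i)
      · simpa [conFam] using ((hr10 i).smul_const (ex i)).const_add (ey i))
    (hL.coeff_eq_zero hT.sum_eq)
    (conCoeff Mb.lam (zext (Q0 D xb) Mb.mu1) (-zext (Eact D yb) Mb.mu2) Mb.mu3
      (multX xb yb Mb) (multY xb yb Mb))
    (fun k => conCoeff (M k).lam (zext (Q0 D (X k)) (M k).mu1) (-zext (Eact D (Y k)) (M k).mu2)
      (M k).mu3 (fun i => eta (t k) (X k) (Y k) (M k) i * Y k i)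
      (fun i => eta (t k) (X k) (Y k) (M k) i * X k i + zext (Nact (Y k)) (M k).nu i)) (by
      rw [hT.2.2.2.2.2.2.combination]
      refine Tendsto.congr' ?_ ((hgrad D.hf).prodMk_nhds tendsto_const_nhds)
      filter_upwards [h01, h10, eventually_Q0_subset (D := D) hX,
        eventually_Eact_subset (D := D) hY] with k h1 h2
        h3 h4
      exact ((hK k).combination hT.1 h3 h4 h1 h2).symm)
  refine ⟨fun p => key (.inl p) (by simp [mpocSet, conSet]), fun q => ?_, fun i hi => ?_,
    key (.inr (.inr (.inr (.inl ())))) (by simp [mpocSet, conSet]),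
    fun i hi => key (.inr (.inr (.inr (.inr (.inl i))))) (by simpa [mpocSet, conSet] using hi),
    fun i hi => key (.inr (.inr (.inr (.inr (.inr i))))) (by simpa [mpocSet, conSet] using hi)⟩
  · by_cases hq : q ∈ Q0 D xb
    · exact key (.inr (.inl q)) (by simpa [mpocSet, conSet] using hq)
    · rw [zext_apply, if_neg hq]
      refine tendsto_const_nhds.congr' ?_
      filter_upwards [eventually_Q0_subset (D := D) hX] with k hk
      rw [zext_apply, if_neg fun h => hq (hk h)]
  · have := (key (.inr (.inr (.inl i))) (by simpa [mpocSet, conSet] using hi)).neg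
    simpa [conCoeff, zext_apply _ Mb.mu2, hi] using this

end Limit

theorem feasR.not_mem_Eact {D : Setting n P Q} {y : Vec n} {i : Fin n} (h : y i = 0) :
    i ∉ Eact D y := by
  rw [mem_Eact, h]
  linarith [D.hεpos]

/-- MPOC-LICQ forces some coordinate of `ȳ` to lie strictly between its bounds. -/
theorem MPOC_LICQ.exists_mem_a01 {D : Setting n P Q} {x y : Vec n} (h : MPOC_LICQ D x y)
    (hfeas : feasR D x y) (hsum : ∑ i, y i = (n : ℝ) - D.s) :
    ∃ i ∈ a01 x y, i ∉ Eact D y := by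
  by_contra! hcon
  have h0 := h.coeff_eq_zero hsum (conCoeff 0 0 (fun _ => -1) 1 0 (fun _ => -1)) (by
    have := sum_conCoeff_smul_conFam D x (Q0 D x) (Eact D y) (a01 x y ∪ a00 x y)
      (a10 x y ∪ a00 x y) 0 0 (fun _ => -1) 1 0 (fun _ => -1) 0 0
    simp only [Pi.zero_apply, zero_smul, add_zero, mul_zero] at this
    rw [mpocSet, this]
    refine Prod.ext (funext fun i => ?_) (funext fun i => ?_)
    · simp [zext_apply]
    · rcases hfeas.cases i with hi | hi | hi
      · simp [zext_apply, hcon i hi, not_mem_a10_a00_of_mem_a01 hi]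
      · simp [zext_apply, hi, feasR.not_mem_Eact (D := D) (mem_a10.mp hi).2]
      · simp [zext_apply, hi, feasR.not_mem_Eact (D := D) (mem_a00.mp hi).2])
  have := h0 (.inr (.inr (.inr (.inl ())))) (by simp [mpocSet, conSet])
  simp [conCoeff] at this

theorem TStatAt.multY_ne_zero {D : Setting n P Q} {x y : Vec n} {M : TMult n P Q}
    (h : TStatAt D x y M) (hL : MPOC_LICQ D x y) {i : Fin n} (hi : i ∈ a10 x y) :
    multY x y M i ≠ 0 := by
  obtain ⟨j, hj, hjE⟩ := hL.exists_mem_a01 h.1 h.sum_eq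
  have hcj := h.2.2.2.2.2.2.snd j
  have hci := h.2.2.2.2.2.2.snd i
  have hji : j ≠ i := by
    rintro rfl
    exact (not_mem_a10_a00_of_mem_a01 hj).1 hi
  have hc := D.hcinj.ne hji
  have hmj : multY x y M j = 0 := by
    simp [multY, zext_apply, not_mem_a10_a00_of_mem_a01 hj]
  intro h0
  rw [zext_apply, if_neg hjE, hmj] at hcj
  rw [zext_apply, if_neg (feasR.not_mem_Eact (mem_a10.mp hi).2), h0] at hci
  exact hc (hcj.trans hci.symm)

theorem not_mem_Nact_of_mem_Hact {t : ℝ} (ht : 0 < t) {x y : Vec n} {i : Fin n}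
    (h : i ∈ Hact t x y) : i ∉ Nact y := by
  rw [mem_Nact]
  intro h0
  rw [mem_Hact, h0, mul_zero] at h
  rcases h with h | h <;> linarith

/-- The constraints of `S(t)` active at `(x, y)` are those predicted by the T-stationary
point `(xb, yb)`. -/
structure ActiveLike (D : Setting n P Q) (t : ℝ) (x y xb yb : Vec n) : Prop where
  q0 : Q0 D x = Q0 D xb
  eact : Eact D y = Eact D yb
  sum_eq : ∑ i, y i = (n : ℝ) - D.s
  hact : ∀ i ∈ a01 xb yb ∪ a00 xb yb, i ∈ Hact t x y
  hact_or : ∀ i ∈ a10 xb yb, i ∈ Hact t x y ∨ i ∈ Nact y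

theorem ActiveLike.card {D : Setting n P Q} {t : ℝ} {x y xb yb : Vec n}
    (h : ActiveLike D t x y xb yb) (ht : 0 < t) (hfeas : feasR D xb yb) :
    (Hact t x y).card + (Nact y).card = n := by
  rw [← Finset.card_union_of_disjoint]
  · convert Finset.card_fin n
    refine Finset.eq_univ_of_forall fun i => ?_
    rw [Finset.mem_union]
    rcases hfeas.cases i with hi | hi | hi
    · exact .inl (h.hact i (Finset.mem_union_left _ hi))
    · exact h.hact_or i hi
    · exact .inl (h.hact i (Finset.mem_union_right _ hi))
  · exact Finset.disjoint_left.mpr fun i hi => not_mem_Nact_of_mem_Hact ht hi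

theorem feasR.card {D : Setting n P Q} {x y : Vec n} (h : feasR D x y) :
    (a01 x y ∪ a00 x y).card + (a10 x y ∪ a00 x y).card = n + (a00 x y).card := by
  have h1 : Disjoint (a01 x y) (a00 x y) :=
    Finset.disjoint_left.mpr fun i hi => (not_mem_a10_a00_of_mem_a01 hi).2
  have h2 : Disjoint (a01 x y ∪ a00 x y) (a10 x y) := by
    refine Finset.disjoint_left.mpr fun i hi => ?_
    rcases Finset.mem_union.mp hi with hi | hi
    · exact (not_mem_a10_a00_of_mem_a01 hi).1
    · exact (not_mem_a01_a10_of_mem_a00 hi).2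
  have h3 : Disjoint (a10 x y) (a00 x y) :=
    Finset.disjoint_left.mpr fun i hi => (not_mem_a01_a00_of_mem_a10 hi).2
  have h4 : ((a01 x y ∪ a00 x y) ∪ a10 x y).card = n := by
    convert Finset.card_fin n
    refine Finset.eq_univ_of_forall fun i => ?_
    have := h.cases i
    simp only [Finset.mem_union]
    tauto
  rw [Finset.card_union_of_disjoint h2] at h4
  rw [Finset.card_union_of_disjoint h3]
  omega

theorem ActiveLike.finrank_le {D : Setting n P Q} {t : ℝ} {x y xb yb : Vec n}
    (h : ActiveLike D t x y xb yb) (ht : 0 < t) (hfeas : feasR D xb yb)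
    (hL : MPOC_LICQ D xb yb) (hsum : ∑ i, yb i = (n : ℝ) - D.s) :
    Module.finrank ℝ (tangentR D xb yb) + (a00 xb yb).card ≤
      Module.finrank ℝ (tangentS D t x y) := by
  have h1 := finrank_tangentR_add_card_le hL hsum
  have h2 := finrank_le_finrank_tangentS_add D t x y
  have h3 := h.card ht hfeas
  have h4 := hfeas.card
  rw [card_conSet, h.q0, h.eact] at h2
  rw [mpocSet, card_conSet] at h1
  omega

section Limit
variable {ι : Type*} {l : Filter ι} {D : Setting n P Q} {t : ι → ℝ} {X Y : ι → Vec n}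
  {M : ι → SMult n P Q} {xb yb : Vec n} {Mb : TMult n P Q}

theorem eventually_activeLike (hX : Tendsto X l (𝓝 xb)) (hY : Tendsto Y l (𝓝 yb))
    (hK : ∀ k, KKTAt D (t k) (X k) (Y k) (M k)) (hnd : NondegTStatAt D xb yb Mb)
    (hsig : ∀ i ∈ a01 xb yb, Mb.sig1 i ≠ 0) :
    ∀ᶠ k in l, ActiveLike D (t k) (X k) (Y k) xb yb := by
  obtain ⟨hT, hL, hmu1, hmu2, hmu3, hrho, -⟩ := hnd
  obtain ⟨-, h1, h2, h3, h4, h5⟩ :=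
    multipliers_tendsto hX hY (fun k => (hK k).2.2.2.2.2.2.2.2) hT hL
  have e1 : ∀ᶠ k in l, ∀ q, q ∈ Q0 D xb → q ∈ Q0 D (X k) := eventually_all.mpr fun q => by
    by_cases hq : q ∈ Q0 D xb
    · have := h1 q
      rw [zext_apply, if_pos hq] at this
      filter_upwards [this.eventually_ne (hmu1 q hq).ne'] with k hk _
      exact mem_of_zext_ne_zero hk
    · simp [hq]
  have e2 : ∀ᶠ k in l, ∀ i, i ∈ Eact D yb → i ∈ Eact D (Y k) := eventually_all.mpr fun i => by
    by_cases hi : i ∈ Eact D yb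
    · filter_upwards [(h2 i hi).eventually_ne (hmu2 i hi).ne'] with k hk _
      exact mem_of_zext_ne_zero hk
    · simp [hi]
  have e4 : ∀ᶠ k in l, ∀ i, i ∈ a01 xb yb ∪ a00 xb yb → i ∈ Hact (t k) (X k) (Y k) :=
    eventually_all.mpr fun i => by
      by_cases hi : i ∈ a01 xb yb ∪ a00 xb yb
      · have hne : multX xb yb Mb i ≠ 0 := by
          rcases Finset.mem_union.mp hi with hi | hi
          · simpa [multX, zext_apply, hi, not_mem_a10_a00_of_mem_a01 hi] using hsig i hi
          · simpa [multX, zext_apply, hi, not_mem_a01_a10_of_mem_a00 hi] using (hrho i hi).1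
        filter_upwards [(h4 i hi).eventually_ne hne] with k hk _
        by_contra hn
        exact hk (by rw [eta_eq_zero hn, zero_mul])
      · filter_upwards with k hk using absurd hk hi
  have e5 : ∀ᶠ k in l, ∀ i, i ∈ a10 xb yb → i ∈ Hact (t k) (X k) (Y k) ∨ i ∈ Nact (Y k) :=
    eventually_all.mpr fun i => by
      by_cases hi : i ∈ a10 xb yb
      · filter_upwards [(h5 i (Finset.mem_union_left _ hi)).eventually_ne
          (hT.multY_ne_zero hL hi)] with k hk _
        by_contra! hn
        exact hk (by rw [eta_eq_zero hn.1, zext_apply, if_neg hn.2, zero_mul, add_zero])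
      · simp [hi]
  filter_upwards [e1, e2, e4, e5, h3.eventually_ne (hmu3 hT.sum_eq).ne',
    eventually_Q0_subset (D := D) hX, eventually_Eact_subset (D := D) hY] with
    k k1 k2 k4 k5 k3 k6 k7
  exact ⟨k6.antisymm k1, k7.antisymm k2,
    sub_eq_zero.mp ((mul_eq_zero.mp (hK k).2.2.2.2.1).resolve_left k3), k4, k5⟩

end Limit

/-- The second derivative of `F` at `x`. -/
def secondDeriv (F : Vec n → ℝ) (x : Vec n) : Vec n →L[ℝ] Vec n →L[ℝ] ℝ :=
  fderiv ℝ (fderiv ℝ F) x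

theorem contDiff_fderiv_of_two {F : Vec n → ℝ} (hF : ContDiff ℝ 2 F) :
    ContDiff ℝ 1 (fderiv ℝ F) :=
  hF.fderiv_right (by norm_num)

theorem secondDeriv_comm {F : Vec n → ℝ} (hF : ContDiff ℝ 2 F) (x u v : Vec n) :
    secondDeriv F x u v = secondDeriv F x v u :=
  (hF.contDiffAt.isSymmSndFDerivAt (by simp)) u v

theorem continuous_secondDeriv {F : Vec n → ℝ} (hF : ContDiff ℝ 2 F) :
    Continuous (secondDeriv F) :=
  (contDiff_fderiv_of_two hF).continuous_fderiv (by norm_num)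

theorem secondDeriv_add {F G : Vec n → ℝ} (hF : ContDiff ℝ 2 F) (hG : ContDiff ℝ 2 G)
    (x : Vec n) : secondDeriv (F + G) x = secondDeriv F x + secondDeriv G x := by
  have h : fderiv ℝ (F + G) = fderiv ℝ F + fderiv ℝ G := funext fun w =>
    fderiv_add (hF.differentiable (by norm_num) w) (hG.differentiable (by norm_num) w)
  rw [secondDeriv, h]
  exact fderiv_add ((contDiff_fderiv_of_two hF).differentiable (by norm_num) x)
    ((contDiff_fderiv_of_two hG).differentiable (by norm_num) x)

theorem secondDeriv_smul {F : Vec n → ℝ} (hF : ContDiff ℝ 2 F) (a : ℝ) (x : Vec n) :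
    secondDeriv (a • F) x = a • secondDeriv F x := by
  have h : fderiv ℝ (a • F) = a • fderiv ℝ F := funext fun w =>
    fderiv_const_smul (hF.differentiable (by norm_num) w) a
  rw [secondDeriv, h]
  exact fderiv_const_smul ((contDiff_fderiv_of_two hF).differentiable (by norm_num) x) a

theorem contDiff_sum_smul {α : Type*} (S : Finset α) (a : α → ℝ) (F : α → Vec n → ℝ)
    (hF : ∀ j, ContDiff ℝ 2 (F j)) : ContDiff ℝ 2 (∑ j ∈ S, a j • F j) := by
  have h : (∑ j ∈ S, a j • F j) = fun x => ∑ j ∈ S, a j • F j x := by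
    ext x
    simp [Finset.sum_apply]
  rw [h]
  exact ContDiff.sum fun j _ => (hF j).const_smul (a j)

theorem secondDeriv_sum_smul {α : Type*} (S : Finset α) (a : α → ℝ) (F : α → Vec n → ℝ)
    (hF : ∀ j, ContDiff ℝ 2 (F j)) (x : Vec n) :
    secondDeriv (∑ j ∈ S, a j • F j) x = ∑ j ∈ S, a j • secondDeriv (F j) x := by
  induction S using Finset.induction_on with
  | empty =>
    have h : fderiv ℝ (0 : Vec n → ℝ) = 0 := fderiv_zero
    rw [Finset.sum_empty, Finset.sum_empty, secondDeriv, h, fderiv_zero]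
    rfl
  | insert j S hj ih =>
    have hs : ContDiff ℝ 2 (a j • F j) := (hF j).const_smul (a j)
    rw [Finset.sum_insert hj, Finset.sum_insert hj,
      secondDeriv_add hs (contDiff_sum_smul S a F hF),
      secondDeriv_smul (hF j), ih]

/-- The part of the Lagrange function that depends on the `x`-variables only nonlinearly. -/
def lagF (D : Setting n P Q) (lam : P → ℝ) (mu1 : Q → ℝ) : Vec n → ℝ :=
  D.f + ∑ p, (-lam p) • D.h p + ∑ q, (-mu1 q) • D.g q

theorem contDiff_lagF (D : Setting n P Q) (lam : P → ℝ) (mu1 : Q → ℝ) :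
    ContDiff ℝ 2 (lagF D lam mu1) :=
  (D.hf.add (contDiff_sum_smul _ _ _ D.hh)).add (contDiff_sum_smul _ _ _ D.hg)

theorem secondDeriv_lagF (D : Setting n P Q) (lam : P → ℝ) (mu1 : Q → ℝ) (x : Vec n) :
    secondDeriv (lagF D lam mu1) x = secondDeriv D.f x + ∑ p, (-lam p) • secondDeriv (D.h p) x
      + ∑ q, (-mu1 q) • secondDeriv (D.g q) x := by
  have hs : ContDiff ℝ 2 (D.f + ∑ p, (-lam p) • D.h p) :=
    D.hf.add (contDiff_sum_smul _ _ _ D.hh)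
  rw [lagF, secondDeriv_add hs (contDiff_sum_smul _ _ _ D.hg), secondDeriv_add D.hf (contDiff_sum_smul _ _ _ D.hh),
    secondDeriv_sum_smul _ _ _ D.hh, secondDeriv_sum_smul _ _ _ D.hg]

theorem tendsto_secondDeriv_lagF {ι : Type*} {l : Filter ι} (D : Setting n P Q)
    {lam : ι → P → ℝ} {mu1 : ι → Q → ℝ} {X : ι → Vec n} {lamb : P → ℝ} {mub : Q → ℝ} {xb : Vec n}
    {u v : ι → Vec n} {ub vb : Vec n}
    (hlam : ∀ p, Tendsto (fun k => lam k p) l (𝓝 (lamb p)))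
    (hmu : ∀ q, Tendsto (fun k => mu1 k q) l (𝓝 (mub q))) (hX : Tendsto X l (𝓝 xb))
    (hu : Tendsto u l (𝓝 ub)) (hv : Tendsto v l (𝓝 vb)) :
    Tendsto (fun k => secondDeriv (lagF D (lam k) (mu1 k)) (X k) (u k) (v k)) l
      (𝓝 (secondDeriv (lagF D lamb mub) xb ub vb)) := by
  simp only [secondDeriv_lagF, _root_.add_apply, _root_.sum_apply, _root_.smul_apply, smul_eq_mul]
  have h : ∀ {F : Vec n → ℝ}, ContDiff ℝ 2 F →
      Tendsto (fun k => secondDeriv F (X k) (u k) (v k)) l (𝓝 (secondDeriv F xb ub vb)) :=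
    fun {F} hF => by
      have h : Tendsto (fun k => secondDeriv F (X k)) l (𝓝 (secondDeriv F xb)) :=
        ((continuous_secondDeriv hF).tendsto xb).comp hX
      have hc : Continuous fun z : (Vec n →L[ℝ] Vec n →L[ℝ] ℝ) × Vec n × Vec n =>
          z.1 z.2.1 z.2.2 :=
        (continuous_fst.clm_apply (continuous_fst.comp continuous_snd)).clm_apply
          (continuous_snd.comp continuous_snd)
      exact (hc.tendsto (secondDeriv F xb, ub, vb)).comp (h.prodMk_nhds (hu.prodMk_nhds hv))
  exact ((h D.hf).add (tendsto_finsetSum _ fun p _ => (hlam p).neg.mul (h (D.hh p)))).add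
    (tendsto_finsetSum _ fun q _ => (hmu q).neg.mul (h (D.hg q)))

/-- The symmetric bilinear form with second derivative `A` in the `x`-variables and coupling
coefficients `κ` between `x_i` and `y_i`. -/
def couplingForm (A : Vec n →L[ℝ] Vec n →L[ℝ] ℝ) (κ : Vec n) :
    LinearMap.BilinForm ℝ (Vec n × Vec n) :=
  LinearMap.mk₂ ℝ (fun ξ ζ => A ζ.1 ξ.1 + ∑ i, κ i * (ξ.1 i * ζ.2 i + ζ.1 i * ξ.2 i))
    (by intros; simp only [Prod.fst_add, Prod.snd_add, Pi.add_apply, map_add, add_mul, mul_add,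
          Finset.sum_add_distrib]; ring)
    (by intros; simp only [Prod.smul_fst, Prod.smul_snd, Pi.smul_apply, smul_eq_mul, map_smul,
          mul_add, Finset.mul_sum]; congr 1; refine Finset.sum_congr rfl fun i _ => ?_; ring)
    (by intros; simp only [Prod.fst_add, Prod.snd_add, Pi.add_apply, map_add, add_mul, mul_add,
          Finset.sum_add_distrib, _root_.add_apply]; ring)
    (by intros; simp only [Prod.smul_fst, Prod.smul_snd, Pi.smul_apply, smul_eq_mul, map_smul,
          mul_add, Finset.mul_sum, _root_.smul_apply]; congr 1
        refine Finset.sum_congr rfl fun i _ => ?_; ring)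

theorem couplingForm_apply (A : Vec n →L[ℝ] Vec n →L[ℝ] ℝ) (κ : Vec n) (ξ ζ : Vec n × Vec n) :
    couplingForm A κ ξ ζ = A ζ.1 ξ.1 + ∑ i, κ i * (ξ.1 i * ζ.2 i + ζ.1 i * ξ.2 i) := rfl

theorem couplingForm_comm {A : Vec n →L[ℝ] Vec n →L[ℝ] ℝ} (hA : ∀ u v, A u v = A v u)
    (κ : Vec n) (ξ ζ : Vec n × Vec n) : couplingForm A κ ξ ζ = couplingForm A κ ζ ξ := by
  rw [couplingForm_apply, couplingForm_apply, hA]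
  congr 1
  refine Finset.sum_congr rfl fun i _ => ?_
  ring

theorem hess_eq_couplingForm {L : Vec n × Vec n → ℝ} {F : Vec n → ℝ} (hF : ContDiff ℝ 2 F)
    (a b κ : Vec n) (C : ℝ)
    (hL : ∀ z, L z = F z.1 + (∑ i, a i * z.1 i) + (∑ i, b i * z.2 i)
      + (∑ i, κ i * (z.1 i * z.2 i)) + C) (z ξ ζ : Vec n × Vec n) :
    hess L z ξ ζ = couplingForm (secondDeriv F z.1) κ ξ ζ := by
  let p1 : Fin n → (Vec n × Vec n →L[ℝ] ℝ) := fun i =>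
    (ContinuousLinearMap.proj i).comp (ContinuousLinearMap.fst ℝ (Vec n) (Vec n))
  let p2 : Fin n → (Vec n × Vec n →L[ℝ] ℝ) := fun i =>
    (ContinuousLinearMap.proj i).comp (ContinuousLinearMap.snd ℝ (Vec n) (Vec n))
  have hfirst : ∀ w, fderiv ℝ L w ξ = fderiv ℝ F w.1 ξ.1 + (∑ i, a i * ξ.1 i)
      + (∑ i, b i * ξ.2 i) + ∑ i, κ i * (w.1 i * ξ.2 i + w.2 i * ξ.1 i) := by
    intro w
    have h1 : HasFDerivAt (fun z : Vec n × Vec n => F z.1)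
        ((fderiv ℝ F w.1).comp (ContinuousLinearMap.fst ℝ (Vec n) (Vec n))) w :=
      ((hF.differentiable (by norm_num) w.1).hasFDerivAt).comp w hasFDerivAt_fst
    have h2 : HasFDerivAt (fun z : Vec n × Vec n => ∑ i, a i * z.1 i) (∑ i, a i • p1 i) w :=
      HasFDerivAt.fun_sum fun i _ => ((p1 i).hasFDerivAt.const_mul (a i))
    have h3 : HasFDerivAt (fun z : Vec n × Vec n => ∑ i, b i * z.2 i) (∑ i, b i • p2 i) w :=
      HasFDerivAt.fun_sum fun i _ => ((p2 i).hasFDerivAt.const_mul (b i))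
    have h4 : HasFDerivAt (fun z : Vec n × Vec n => ∑ i, κ i * (z.1 i * z.2 i))
        (∑ i, κ i • (w.1 i • p2 i + w.2 i • p1 i)) w :=
      HasFDerivAt.fun_sum fun i _ =>
        (((p1 i).hasFDerivAt.mul (p2 i).hasFDerivAt).const_mul (κ i))
    have h := ((((h1.add h2).add h3).add h4).add_const C).congr_of_eventuallyEq
      (Eventually.of_forall hL)
    rw [h.fderiv]
    simp [p1, p2, mul_add]
  rw [hess, funext hfirst]
  have h1 : HasFDerivAt (fun w : Vec n × Vec n => fderiv ℝ F w.1 ξ.1)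
      (((secondDeriv F z.1).flip ξ.1).comp (ContinuousLinearMap.fst ℝ (Vec n) (Vec n))) z := by
    have h := ((contDiff_fderiv_of_two hF).differentiable (by norm_num) z.1).hasFDerivAt.comp z
      hasFDerivAt_fst
    exact ((ContinuousLinearMap.apply ℝ ℝ ξ.1).hasFDerivAt.comp z h)
  have h4 : HasFDerivAt (fun w : Vec n × Vec n => ∑ i, κ i * (w.1 i * ξ.2 i + w.2 i * ξ.1 i))
      (∑ i, κ i • (ξ.2 i • p1 i + ξ.1 i • p2 i)) z :=
    HasFDerivAt.fun_sum fun i _ =>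
      (((p1 i).hasFDerivAt.mul_const (ξ.2 i)).add
        ((p2 i).hasFDerivAt.mul_const (ξ.1 i))).const_mul (κ i)
  have h := ((h1.add_const (∑ i, a i * ξ.1 i)).add_const (∑ i, b i * ξ.2 i)).add h4
  refine (congrArg (fun A => A ζ) h.fderiv).trans ?_
  rw [couplingForm_apply]
  simp only [_root_.add_apply, ContinuousLinearMap.comp_apply,
    ContinuousLinearMap.flip_apply, _root_.sum_apply, _root_.smul_apply,
    ContinuousLinearMap.coe_fst',
    ContinuousLinearMap.coe_snd', ContinuousLinearMap.proj_apply, smul_eq_mul, p1, p2]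
  congr 1
  refine Finset.sum_congr rfl fun i _ => ?_
  ring

theorem hess_LagS (D : Setting n P Q) (t : ℝ) (x y : Vec n) (M : SMult n P Q) :
    hess (LagS D t x y M) (x, y) = fun ξ ζ =>
      couplingForm (secondDeriv (lagF D M.lam (zext (Q0 D x) M.mu1)) x) (-eta t x y M) ξ ζ := by
  funext ξ ζ
  refine hess_eq_couplingForm (contDiff_lagF D _ _) 0
    (fun i => D.c i + zext (Eact D y) M.mu2 i - M.mu3 - zext (Nact y) M.nu i) _
    (-(∑ i, zext (Eact D y) M.mu2 i * (1 + D.ε)) + M.mu3 * ((n : ℝ) - D.s)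
      - (∑ i, zext (Hge t x y) M.etaGe i * t) - (∑ i, zext (Hle t x y) M.etaLe i * t)) ?_ (x, y) ξ ζ
  intro z
  have hq := sum_zext_mul (Finset.subset_univ (Q0 D x)) M.mu1 (fun q => D.g q z.1)
  have hE := sum_zext_mul (Finset.subset_univ (Eact D y)) M.mu2 (fun i => z.2 i - (1 + D.ε))
  have hN := sum_zext_mul (Finset.subset_univ (Nact y)) M.nu (fun i => z.2 i)
  have hG := sum_zext_mul (Finset.subset_univ (Hge t x y)) M.etaGe (fun i => z.1 i * z.2 i + t)
  have hl := sum_zext_mul (Finset.subset_univ (Hle t x y)) M.etaLe (fun i => z.1 i * z.2 i - t)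
  rw [LagS, ← hq, ← hE, ← hN, ← hG, ← hl]
  simp only [lagF, dot, eta, Pi.add_apply, Finset.sum_apply, Pi.smul_apply, smul_eq_mul, neg_mul,
    Finset.sum_neg_distrib, Pi.zero_apply, zero_mul, Finset.sum_const_zero, Pi.neg_apply,
    Pi.sub_apply, mul_add, mul_sub, add_mul, sub_mul, Finset.sum_add_distrib,
    Finset.sum_sub_distrib, neg_sub, ← Finset.mul_sum]
  ring

theorem hess_LagR (D : Setting n P Q) (x y : Vec n) (M : TMult n P Q) :
    hess (LagR D x y M) (x, y) = fun ξ ζ =>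
      couplingForm (secondDeriv (lagF D M.lam (zext (Q0 D x) M.mu1)) x) 0 ξ ζ := by
  funext ξ ζ
  refine hess_eq_couplingForm (contDiff_lagF D _ _) (-multX x y M)
    (fun i => D.c i + zext (Eact D y) M.mu2 i - M.mu3 - multY x y M i) _
    (-(∑ i, zext (Eact D y) M.mu2 i * (1 + D.ε)) + M.mu3 * ((n : ℝ) - D.s)) ?_ (x, y) ξ ζ
  intro z
  have hq := sum_zext_mul (Finset.subset_univ (Q0 D x)) M.mu1 (fun q => D.g q z.1)
  have hE := sum_zext_mul (Finset.subset_univ (Eact D y)) M.mu2 (fun i => z.2 i - (1 + D.ε))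
  have h1 := sum_zext_mul (Finset.subset_univ (a01 x y)) M.sig1 (fun i => z.1 i)
  have h2 := sum_zext_mul (Finset.subset_univ (a10 x y)) M.sig2 (fun i => z.2 i)
  have h3 := sum_zext_mul (Finset.subset_univ (a00 x y)) M.rho1 (fun i => z.1 i)
  have h4 := sum_zext_mul (Finset.subset_univ (a00 x y)) M.rho2 (fun i => z.2 i)
  rw [LagR, Finset.sum_add_distrib, ← hq, ← hE, ← h1, ← h2, ← h3, ← h4]
  simp only [lagF, dot, multX, multY, Pi.add_apply, Finset.sum_apply, Pi.smul_apply, smul_eq_mul,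
    neg_mul, Finset.sum_neg_distrib, Pi.zero_apply, zero_mul, Finset.sum_const_zero, Pi.neg_apply,
    mul_sub, add_mul, sub_mul, neg_add, mul_add, Finset.sum_add_distrib,
    Finset.sum_sub_distrib, ← Finset.mul_sum]
  ring

theorem ActiveLike.coupling {D : Setting n P Q} {t : ℝ} {x y xb yb : Vec n}
    (h : ActiveLike D t x y xb yb) (hfeas : feasR D xb yb) {ξ : Vec n × Vec n}
    (hξ : ξ ∈ tangentS D t x y) (i : Fin n) : y i * ξ.1 i + x i * ξ.2 i = 0 := by
  obtain ⟨-, -, -, -, hH, hN⟩ := hξ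
  rcases hfeas.cases i with hi | hi | hi
  · exact hH i (h.hact i (Finset.mem_union_left _ hi))
  · rcases h.hact_or i hi with hi | hi
    · exact hH i hi
    · rw [mem_Nact.mp hi, hN i hi, zero_mul, mul_zero, add_zero]
  · exact hH i (h.hact i (Finset.mem_union_right _ hi))

section Limit
variable {ι : Type*} {l : Filter ι} [l.NeBot] {D : Setting n P Q} {t : ι → ℝ} {X Y : ι → Vec n}
  {M : ι → SMult n P Q} {xb yb : Vec n} {Mb : TMult n P Q} {u : ι → Vec n × Vec n}
  {w : Vec n × Vec n}

theorem tendsto_fst_coord (hw : Tendsto u l (𝓝 w)) (i : Fin n) :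
    Tendsto (fun k => (u k).1 i) l (𝓝 (w.1 i)) :=
  tendsto_pi_nhds.mp ((continuous_fst.tendsto w).comp hw) i

theorem tendsto_snd_coord (hw : Tendsto u l (𝓝 w)) (i : Fin n) :
    Tendsto (fun k => (u k).2 i) l (𝓝 (w.2 i)) :=
  tendsto_pi_nhds.mp ((continuous_snd.tendsto w).comp hw) i

theorem coupling_limit (hX : Tendsto X l (𝓝 xb)) (hY : Tendsto Y l (𝓝 yb))
    (hA : ∀ᶠ k in l, ActiveLike D (t k) (X k) (Y k) xb yb) (hfeas : feasR D xb yb)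
    (hu : ∀ᶠ k in l, u k ∈ tangentS D (t k) (X k) (Y k)) (hw : Tendsto u l (𝓝 w)) (i : Fin n) :
    yb i * w.1 i + xb i * w.2 i = 0 := by
  have h := ((tendsto_pi_nhds.mp hY i).mul (tendsto_fst_coord hw i)).add
    ((tendsto_pi_nhds.mp hX i).mul (tendsto_snd_coord hw i))
  refine tendsto_nhds_unique (h.congr' ?_) tendsto_const_nhds
  filter_upwards [hA, hu] with k h1 h2 using h1.coupling hfeas h2 i

theorem fst_eq_zero_of_mem_a01 (hX : Tendsto X l (𝓝 xb)) (hY : Tendsto Y l (𝓝 yb))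
    (hA : ∀ᶠ k in l, ActiveLike D (t k) (X k) (Y k) xb yb) (hfeas : feasR D xb yb)
    (hu : ∀ᶠ k in l, u k ∈ tangentS D (t k) (X k) (Y k)) (hw : Tendsto u l (𝓝 w)) {i : Fin n}
    (hi : i ∈ a01 xb yb) : w.1 i = 0 := by
  have h := coupling_limit hX hY hA hfeas hu hw i
  rw [(mem_a01.mp hi).1, zero_mul, add_zero] at h
  exact (mul_eq_zero.mp h).resolve_left (mem_a01.mp hi).2.ne'

/-- Limits of tangent vectors of `S(t)` lie in `T^R`, up to the biactive coordinates. -/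
theorem mem_tangentR_of_tendsto (hX : Tendsto X l (𝓝 xb)) (hY : Tendsto Y l (𝓝 yb))
    (hA : ∀ᶠ k in l, ActiveLike D (t k) (X k) (Y k) xb yb) (hfeas : feasR D xb yb)
    (hu : ∀ᶠ k in l, u k ∈ tangentS D (t k) (X k) (Y k)) (hw : Tendsto u l (𝓝 w))
    (h00 : ∀ i ∈ a00 xb yb, w.1 i = 0 ∧ w.2 i = 0) : w ∈ tangentR D xb yb := by
  have hdot : ∀ {F : Vec n → ℝ}, ContDiff ℝ 2 F →
      (∀ᶠ k in l, dot (grad F (X k)) (u k).1 = 0) → dot (grad F xb) w.1 = 0 := by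
    intro F hF h0
    have h : Tendsto (fun k => dot (grad F (X k)) (u k).1) l (𝓝 (dot (grad F xb) w.1)) :=
      tendsto_finsetSum _ fun i _ =>
        (tendsto_pi_nhds.mp (((continuous_grad hF).tendsto xb).comp hX) i).mul
          (tendsto_fst_coord hw i)
    exact tendsto_nhds_unique (h.congr' h0) tendsto_const_nhds
  refine ⟨fun p => hdot (D.hh p) ?_, fun q hq => hdot (D.hg q) ?_, fun i hi => ?_, fun _ => ?_,
    fun i hi => ?_, fun i hi => ?_⟩
  · filter_upwards [hu] with k hk using hk.1 p
  · filter_upwards [hu, hA] with k hk hAk using hk.2.1 q (hAk.q0 ▸ hq)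
  · refine tendsto_nhds_unique ((tendsto_snd_coord hw i).congr' ?_) tendsto_const_nhds
    filter_upwards [hu, hA] with k hk hAk using hk.2.2.1 i (hAk.eact ▸ hi)
  · refine tendsto_nhds_unique ((tendsto_finsetSum univ fun i _ =>
      tendsto_snd_coord hw i).congr' ?_) tendsto_const_nhds
    filter_upwards [hu, hA] with k hk hAk using hk.2.2.2.1 hAk.sum_eq
  · rcases Finset.mem_union.mp hi with hi | hi
    · exact (h00 i hi).1
    · exact fst_eq_zero_of_mem_a01 hX hY hA hfeas hu hw hi
  · rcases Finset.mem_union.mp hi with hi | hi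
    · exact (h00 i hi).2
    · have h := coupling_limit hX hY hA hfeas hu hw i
      rw [(mem_a10.mp hi).2, zero_mul, zero_add] at h
      exact (mul_eq_zero.mp h).resolve_left (mem_a10.mp hi).1

/-- Outside the biactive coordinates the coupling terms of the Hessian vanish in the limit. -/
theorem tendsto_coupling_term (hX : Tendsto X l (𝓝 xb)) (hY : Tendsto Y l (𝓝 yb))
    (ht : ∀ k, 0 < t k) (hK : ∀ k, KKTEq D (t k) (X k) (Y k) (M k)) (hT : TStatAt D xb yb Mb)
    (hL : MPOC_LICQ D xb yb) (hA : ∀ᶠ k in l, ActiveLike D (t k) (X k) (Y k) xb yb)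
    (hu : ∀ᶠ k in l, u k ∈ tangentS D (t k) (X k) (Y k)) (hw : Tendsto u l (𝓝 w)) {i : Fin n}
    (hi : i ∉ a00 xb yb) :
    Tendsto (fun k => eta (t k) (X k) (Y k) (M k) i * ((u k).1 i * (u k).2 i)) l (𝓝 0) := by
  obtain ⟨-, -, -, -, h4, h5⟩ := multipliers_tendsto hX hY hK hT hL
  have hXi := tendsto_pi_nhds.mp hX i
  have hYi := tendsto_pi_nhds.mp hY i
  have hu1 := tendsto_fst_coord hw i
  have hu2 := tendsto_snd_coord hw i
  rcases hT.1.cases i with hi' | hi' | hi'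
  · have hyb := (mem_a01.mp hi').2.ne'
    have h := ((h4 i (Finset.mem_union_left _ hi')).mul (hu1.mul hu2)).div hYi hyb
    rw [fst_eq_zero_of_mem_a01 hX hY hA hT.1 hu hw hi', zero_mul, mul_zero, zero_div] at h
    refine h.congr' ?_
    filter_upwards [hYi.eventually_ne hyb] with k hk
    rw [Pi.div_apply]
    field_simp
  · obtain ⟨hxb, hyb⟩ := mem_a10.mp hi'
    have h := ((h5 i (Finset.mem_union_left _ hi')).abs.mul
      (hYi.abs.mul (hu1.pow 2))).div (hXi.pow 2) (pow_ne_zero 2 hxb)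
    rw [hyb, abs_zero, zero_mul, mul_zero, zero_div] at h
    refine squeeze_zero_norm' ?_ h
    filter_upwards [hXi.eventually_ne hxb, hA, hu] with k hk hAk huk
    have hc := hAk.coupling hT.1 huk i
    rw [Pi.div_apply, Real.norm_eq_abs, le_div_iff₀ (by positivity)]
    have h1 : eta (t k) (X k) (Y k) (M k) i * ((u k).1 i * (u k).2 i) * X k i ^ 2 =
        -(eta (t k) (X k) (Y k) (M k) i * X k i) * (Y k i * (u k).1 i ^ 2) := by
      linear_combination eta (t k) (X k) (Y k) (M k) i * (u k).1 i * X k i * hc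
    have h2 : |eta (t k) (X k) (Y k) (M k) i * X k i| ≤
        |eta (t k) (X k) (Y k) (M k) i * X k i + zext (Nact (Y k)) (M k).nu i| := by
      by_cases hH : i ∈ Hact (t k) (X k) (Y k)
      · rw [zext_apply, if_neg (not_mem_Nact_of_mem_Hact (ht k) hH), add_zero]
      · rw [eta_eq_zero hH, zero_mul, abs_zero]
        exact abs_nonneg _
    calc |eta (t k) (X k) (Y k) (M k) i * ((u k).1 i * (u k).2 i)| * X k i ^ 2
        = |eta (t k) (X k) (Y k) (M k) i * ((u k).1 i * (u k).2 i) * X k i ^ 2| := by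
          rw [abs_mul _ (X k i ^ 2), abs_of_nonneg (sq_nonneg (X k i))]
      _ = |eta (t k) (X k) (Y k) (M k) i * X k i| * (|Y k i| * (u k).1 i ^ 2) := by
          rw [h1, abs_mul, abs_neg, abs_mul (Y k i), abs_of_nonneg (sq_nonneg ((u k).1 i))]
      _ ≤ _ := mul_le_mul_of_nonneg_right h2 (by positivity)
  · exact absurd hi' hi

theorem tendsto_eta_mul_of_mem_a00 (hX : Tendsto X l (𝓝 xb)) (hY : Tendsto Y l (𝓝 yb))
    (ht : ∀ k, 0 < t k) (hK : ∀ k, KKTEq D (t k) (X k) (Y k) (M k)) (hT : TStatAt D xb yb Mb)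
    (hL : MPOC_LICQ D xb yb) (hA : ∀ᶠ k in l, ActiveLike D (t k) (X k) (Y k) xb yb) {i : Fin n}
    (hi : i ∈ a00 xb yb) :
    Tendsto (fun k => eta (t k) (X k) (Y k) (M k) i * Y k i) l (𝓝 (Mb.rho1 i)) ∧
      Tendsto (fun k => eta (t k) (X k) (Y k) (M k) i * X k i) l (𝓝 (Mb.rho2 i)) := by
  obtain ⟨-, -, -, -, h4, h5⟩ := multipliers_tendsto hX hY hK hT hL
  have h4 := h4 i (Finset.mem_union_right _ hi)
  have h5 := h5 i (Finset.mem_union_right _ hi)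
  have hn := not_mem_a01_a10_of_mem_a00 hi
  simp only [multX, multY, Pi.add_apply, zext_apply (a01 xb yb), zext_apply (a10 xb yb),
    zext_apply (a00 xb yb), hn, hi, if_true, if_false, zero_add] at h4 h5
  refine ⟨h4, h5.congr' ?_⟩
  filter_upwards [hA] with k hk
  rw [zext_apply, if_neg (not_mem_Nact_of_mem_Hact (ht k)
    (hk.hact i (Finset.mem_union_right _ hi))), add_zero]

/-- The coupling terms of the biactive coordinates have a sign. -/
theorem eventually_coupling_term_nonneg (hX : Tendsto X l (𝓝 xb)) (hY : Tendsto Y l (𝓝 yb))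
    (ht : ∀ k, 0 < t k) (hK : ∀ k, KKTAt D (t k) (X k) (Y k) (M k))
    (hnd : NondegTStatAt D xb yb Mb) (hA : ∀ᶠ k in l, ActiveLike D (t k) (X k) (Y k) xb yb)
    (hu : ∀ᶠ k in l, u k ∈ tangentS D (t k) (X k) (Y k)) {i : Fin n} (hi : i ∈ a00 xb yb) :
    ∀ᶠ k in l, 0 ≤ eta (t k) (X k) (Y k) (M k) i * ((u k).1 i * (u k).2 i) := by
  obtain ⟨-, hx⟩ := tendsto_eta_mul_of_mem_a00 hX hY ht (fun k => (hK k).2.2.2.2.2.2.2.2) hnd.1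
    hnd.2.1 hA hi
  filter_upwards [hx.eventually_lt_const (hnd.2.2.2.2.2.1 i hi).2, hA, hu] with k hk hAk huk
  have hc := hAk.coupling hnd.1.1 huk i
  have hx0 : X k i ≠ 0 := by
    rintro h
    rw [h, mul_zero] at hk
    exact lt_irrefl _ hk
  have hy0 : 0 ≤ Y k i := ((hK k).1.2.2.2.2 i).1
  have h1 : eta (t k) (X k) (Y k) (M k) i * ((u k).1 i * (u k).2 i) * X k i ^ 2 =
      -(eta (t k) (X k) (Y k) (M k) i * X k i) * (Y k i * (u k).1 i ^ 2) := by
    linear_combination eta (t k) (X k) (Y k) (M k) i * (u k).1 i * X k i * hc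
  refine nonneg_of_mul_nonneg_left (b := X k i ^ 2) ?_ (by positivity)
  rw [h1]
  exact mul_nonneg (by linarith) (by positivity)

theorem tendsto_zero_of_bounded {a b c : ι → ℝ} {L : ℝ} (ha : Tendsto a l (𝓝 0))
    (hb : Tendsto b l (𝓝 L)) (h0 : ∀ᶠ k in l, 0 ≤ c k) (hcb : ∀ᶠ k in l, c k ≤ b k) :
    Tendsto (fun k => a k * c k) l (𝓝 0) := by
  have h := ha.abs.mul hb
  rw [abs_zero, zero_mul] at h
  refine squeeze_zero_norm' ?_ h
  filter_upwards [h0, hcb] with k h1 h2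
  rw [norm_mul, Real.norm_eq_abs, Real.norm_eq_abs, abs_of_nonneg h1]
  exact mul_le_mul_of_nonneg_left h2 (abs_nonneg _)

/-- If the coupling term of a biactive coordinate is bounded, both components of that coordinate
vanish in the limit. -/
theorem eq_zero_of_coupling_term_bounded (hX : Tendsto X l (𝓝 xb)) (hY : Tendsto Y l (𝓝 yb))
    (ht : ∀ k, 0 < t k) (hK : ∀ k, KKTAt D (t k) (X k) (Y k) (M k))
    (hnd : NondegTStatAt D xb yb Mb) (hA : ∀ᶠ k in l, ActiveLike D (t k) (X k) (Y k) xb yb)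
    (hu : ∀ᶠ k in l, u k ∈ tangentS D (t k) (X k) (Y k)) (hw : Tendsto u l (𝓝 w)) {i : Fin n}
    (hi : i ∈ a00 xb yb) {b : ι → ℝ} {L : ℝ} (hb : Tendsto b l (𝓝 L))
    (hle : ∀ᶠ k in l, eta (t k) (X k) (Y k) (M k) i * ((u k).1 i * (u k).2 i) ≤ b k) :
    w.1 i = 0 ∧ w.2 i = 0 := by
  obtain ⟨hy, hx⟩ := tendsto_eta_mul_of_mem_a00 hX hY ht (fun k => (hK k).2.2.2.2.2.2.2.2) hnd.1
    hnd.2.1 hA hi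
  have h0 := eventually_coupling_term_nonneg hX hY ht hK hnd hA hu hi
  obtain ⟨hr1, hr2⟩ := hnd.2.2.2.2.2.1 i hi
  have hXi := (tendsto_pi_nhds.mp hX i).neg
  have hYi := (tendsto_pi_nhds.mp hY i).neg
  rw [(mem_a00.mp hi).1, neg_zero] at hXi
  rw [(mem_a00.mp hi).2, neg_zero] at hYi
  have h1 := tendsto_zero_of_bounded hXi hb h0 hle
  have h2 := tendsto_zero_of_bounded hYi hb h0 hle
  have e1 : Mb.rho1 i * w.1 i ^ 2 = 0 := by
    refine tendsto_nhds_unique (hy.mul ((tendsto_fst_coord hw i).pow 2)) (h1.congr' ?_)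
    filter_upwards [hA, hu] with k hAk huk
    linear_combination -eta (t k) (X k) (Y k) (M k) i * (u k).1 i * hAk.coupling hnd.1.1 huk i
  have e2 : Mb.rho2 i * w.2 i ^ 2 = 0 := by
    refine tendsto_nhds_unique (hx.mul ((tendsto_snd_coord hw i).pow 2)) (h2.congr' ?_)
    filter_upwards [hA, hu] with k hAk huk
    linear_combination -eta (t k) (X k) (Y k) (M k) i * (u k).2 i * hAk.coupling hnd.1.1 huk i
  exact ⟨pow_eq_zero_iff two_ne_zero |>.mp ((mul_eq_zero.mp e1).resolve_left hr1),
    pow_eq_zero_iff two_ne_zero |>.mp ((mul_eq_zero.mp e2).resolve_left hr2.ne)⟩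

end Limit

/-- The Hessian of the Lagrange function of `S(t)` as a bilinear form. -/
def formS (D : Setting n P Q) (t : ℝ) (x y : Vec n) (M : SMult n P Q) :
    LinearMap.BilinForm ℝ (Vec n × Vec n) :=
  couplingForm (secondDeriv (lagF D M.lam (zext (Q0 D x) M.mu1)) x) (-eta t x y M)

/-- The Hessian of the Lagrange function of `R` as a bilinear form. -/
def formR (D : Setting n P Q) (x : Vec n) (M : TMult n P Q) :
    LinearMap.BilinForm ℝ (Vec n × Vec n) :=
  couplingForm (secondDeriv (lagF D M.lam (zext (Q0 D x) M.mu1)) x) 0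

theorem formS_apply_self (D : Setting n P Q) (t : ℝ) (x y : Vec n) (M : SMult n P Q)
    (S : Finset (Fin n)) (ξ : Vec n × Vec n) :
    formS D t x y M ξ ξ = secondDeriv (lagF D M.lam (zext (Q0 D x) M.mu1)) x ξ.1 ξ.1
      - 2 * (∑ i ∈ Sᶜ, eta t x y M i * (ξ.1 i * ξ.2 i))
      - 2 * (∑ i ∈ S, eta t x y M i * (ξ.1 i * ξ.2 i)) := by
  rw [formS, couplingForm_apply, sub_sub, ← mul_add, Finset.sum_compl_add_sum, sub_eq_add_neg,
    Finset.mul_sum, ← Finset.sum_neg_distrib]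
  congr 1
  refine Finset.sum_congr rfl fun i _ => ?_
  rw [Pi.neg_apply]
  ring

section FormLimit
variable {ι : Type*} {l : Filter ι} [l.NeBot] {D : Setting n P Q} {t : ι → ℝ} {X Y : ι → Vec n}
  {M : ι → SMult n P Q} {xb yb : Vec n} {Mb : TMult n P Q} {u : ι → Vec n × Vec n}
  {w : Vec n × Vec n}

/-- The part of the quadratic form without biactive coupling terms converges. -/
theorem tendsto_form_part (hX : Tendsto X l (𝓝 xb)) (hY : Tendsto Y l (𝓝 yb))
    (ht : ∀ k, 0 < t k) (hK : ∀ k, KKTEq D (t k) (X k) (Y k) (M k)) (hT : TStatAt D xb yb Mb)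
    (hL : MPOC_LICQ D xb yb) (hA : ∀ᶠ k in l, ActiveLike D (t k) (X k) (Y k) xb yb)
    (hu : ∀ᶠ k in l, u k ∈ tangentS D (t k) (X k) (Y k)) (hw : Tendsto u l (𝓝 w)) :
    Tendsto (fun k => secondDeriv (lagF D (M k).lam (zext (Q0 D (X k)) (M k).mu1)) (X k)
        (u k).1 (u k).1
      - 2 * (∑ i ∈ (a00 xb yb)ᶜ, eta (t k) (X k) (Y k) (M k) i * ((u k).1 i * (u k).2 i))) l
      (𝓝 (formR D xb Mb w w)) := by
  obtain ⟨h1, h2, -⟩ := multipliers_tendsto hX hY hK hT hL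
  have hw1 : Tendsto (fun k => (u k).1) l (𝓝 w.1) := (continuous_fst.tendsto w).comp hw
  have h := (tendsto_secondDeriv_lagF D h1 h2 hX hw1 hw1).sub
    ((tendsto_finsetSum (a00 xb yb)ᶜ fun i hi => tendsto_coupling_term hX hY ht hK hT hL hA hu hw
      (Finset.mem_compl.mp hi)).const_mul 2)
  convert h using 2
  simp [formR, couplingForm_apply]

theorem mem_tangentR_and_form_nonneg (hX : Tendsto X l (𝓝 xb)) (hY : Tendsto Y l (𝓝 yb))
    (ht : ∀ k, 0 < t k) (hK : ∀ k, KKTAt D (t k) (X k) (Y k) (M k))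
    (hnd : NondegTStatAt D xb yb Mb) (hA : ∀ᶠ k in l, ActiveLike D (t k) (X k) (Y k) xb yb)
    (hu : ∀ᶠ k in l, u k ∈ tangentS D (t k) (X k) (Y k)) (hw : Tendsto u l (𝓝 w))
    (hpos : ∀ᶠ k in l, 0 ≤ formS D (t k) (X k) (Y k) (M k) (u k) (u k)) :
    w ∈ tangentR D xb yb ∧ 0 ≤ formR D xb Mb w w := by
  have hlim := tendsto_form_part hX hY ht (fun k => (hK k).2.2.2.2.2.2.2.2) hnd.1 hnd.2.1 hA hu hw
  have hterm : ∀ᶠ k in l, ∀ i, i ∈ a00 xb yb →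
      0 ≤ eta (t k) (X k) (Y k) (M k) i * ((u k).1 i * (u k).2 i) := eventually_all.mpr fun i => by
    by_cases hi : i ∈ a00 xb yb
    · filter_upwards [eventually_coupling_term_nonneg hX hY ht hK hnd hA hu hi] with k hk _ using hk
    · simp [hi]
  constructor
  · refine mem_tangentR_of_tendsto hX hY hA hnd.1.1 hu hw fun i hi =>
      eq_zero_of_coupling_term_bounded hX hY ht hK hnd hA hu hw hi hlim ?_
    filter_upwards [hpos, hterm] with k h1 h2
    rw [formS_apply_self D _ _ _ _ (a00 xb yb)] at h1
    have h3 := Finset.single_le_sum (fun j hj => h2 j hj) hi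
    have h4 := h2 i hi
    linarith
  · refine ge_of_tendsto hlim ?_
    filter_upwards [hpos, hterm] with k h1 h2
    rw [formS_apply_self D _ _ _ _ (a00 xb yb)] at h1
    have h3 := Finset.sum_nonneg h2
    linarith

theorem mem_tangentR_and_form_nonpos (hX : Tendsto X l (𝓝 xb)) (hY : Tendsto Y l (𝓝 yb))
    (ht : ∀ k, 0 < t k) (hK : ∀ k, KKTEq D (t k) (X k) (Y k) (M k)) (hT : TStatAt D xb yb Mb)
    (hL : MPOC_LICQ D xb yb) (hA : ∀ᶠ k in l, ActiveLike D (t k) (X k) (Y k) xb yb)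
    (hu : ∀ᶠ k in l, u k ∈ tangentS D (t k) (X k) (Y k)) (hw : Tendsto u l (𝓝 w))
    (h00 : ∀ᶠ k in l, ∀ i ∈ a00 xb yb, (u k).1 i = 0)
    (hneg : ∀ᶠ k in l, formS D (t k) (X k) (Y k) (M k) (u k) (u k) ≤ 0) :
    w ∈ tangentR D xb yb ∧ formR D xb Mb w w ≤ 0 := by
  have hlim := tendsto_form_part hX hY ht hK hT hL hA hu hw
  constructor
  · refine mem_tangentR_of_tendsto hX hY hA hT.1 hu hw fun i hi => ⟨?_, ?_⟩
    · refine tendsto_nhds_unique ((tendsto_fst_coord hw i).congr' ?_) tendsto_const_nhds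
      filter_upwards [h00] with k hk using hk i hi
    · refine tendsto_nhds_unique ((tendsto_snd_coord hw i).congr' ?_) tendsto_const_nhds
      filter_upwards [h00, hA, hu] with k hk hAk huk
      have hc := hAk.coupling hT.1 huk i
      rw [hk i hi, mul_zero, zero_add] at hc
      refine (mul_eq_zero.mp hc).resolve_left fun hx => ?_
      have hH := mem_Hact.mp (hAk.hact i (Finset.mem_union_right _ hi))
      rw [hx, zero_mul] at hH
      have := ht k
      rcases hH with h | h <;> linarith
  · refine le_of_tendsto hlim ?_
    filter_upwards [hneg, h00] with k h1 h2
    rw [formS_apply_self D _ _ _ _ (a00 xb yb), Finset.sum_eq_zero (s := a00 xb yb) fun i hi => by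
      rw [h2 i hi, zero_mul, mul_zero]] at h1
    linarith

end FormLimit

theorem disjoint_of_forms {V : Type*} [AddCommGroup V] [Module ℝ V]
    {B : LinearMap.BilinForm ℝ V} {U W : Submodule ℝ V} (hU : ∀ ξ ∈ U, B ξ ξ ≤ 0)
    (hW : ∀ ξ ∈ W, ξ ≠ 0 → 0 < B ξ ξ) : Disjoint U W := by
  rw [Submodule.disjoint_def]
  intro ξ h1 h2
  by_contra h0
  exact absurd (hW ξ h2 h0) (hU ξ h1).not_gt

theorem nonneg_of_pos_of_ne_zero {V : Type*} [AddCommGroup V] [Module ℝ V]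
    {B : LinearMap.BilinForm ℝ V} {ξ : V} (h : ξ ≠ 0 → 0 < B ξ ξ) : 0 ≤ B ξ ξ := by
  by_cases h0 : ξ = 0
  · simp [h0]
  · exact (h h0).le

theorem nonpos_of_neg_of_ne_zero {V : Type*} [AddCommGroup V] [Module ℝ V]
    {B : LinearMap.BilinForm ℝ V} {ξ : V} (h : ξ ≠ 0 → B ξ ξ < 0) : B ξ ξ ≤ 0 := by
  by_cases h0 : ξ = 0
  · simp [h0]
  · exact (h h0).le

theorem finrank_add_finrank_le_of_disjoint_of_le {V : Type*} [AddCommGroup V] [Module ℝ V]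
    [FiniteDimensional ℝ V] {U W T : Submodule ℝ V} (h : Disjoint U W) (hU : U ≤ T)
    (hW : W ≤ T) : Module.finrank ℝ U + Module.finrank ℝ W ≤ Module.finrank ℝ T := by
  have h3 := Submodule.finrank_sup_add_finrank_inf_eq U W
  rw [h.eq_bot, finrank_bot, add_zero] at h3
  exact h3 ▸ Submodule.finrank_mono (sup_le hU hW)

/-- The negative index is the dimension of the negative part of an orthogonal splitting. -/
theorem negIndex_eq {B : LinearMap.BilinForm ℝ (Vec n × Vec n)} {T R S : Submodule ℝ (Vec n × Vec n)}
    (hR : R ≤ T) (hS : S ≤ T)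
    (hdim : Module.finrank ℝ R + Module.finrank ℝ S = Module.finrank ℝ T)
    (hneg : ∀ ξ ∈ R, ξ ≠ 0 → B ξ ξ < 0) (hpos : ∀ ξ ∈ S, ξ ≠ 0 → 0 < B ξ ξ) :
    negIndex (fun ξ ζ => B ξ ζ) (fun ξ => ξ ∈ T) = Module.finrank ℝ R := by
  refine IsGreatest.csSup_eq ⟨⟨R, hR, rfl, hneg⟩, ?_⟩
  rintro d ⟨W, hWT, rfl, hW⟩
  exact Nat.le_of_add_le_add_right <| (finrank_add_finrank_le_of_disjoint_of_le
    (disjoint_of_forms (B := B) (fun ξ hξ => nonpos_of_neg_of_ne_zero (hW ξ hξ)) hpos)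
    hWT hS).trans hdim.ge

/-- The vectors whose `x`-components on `S` vanish. -/
def vanishing (S : Finset (Fin n)) : Submodule ℝ (Vec n × Vec n) where
  carrier := {ξ | ∀ i ∈ S, ξ.1 i = 0}
  zero_mem' := by simp
  add_mem' := fun ha hb i hi => by simp [ha i hi, hb i hi]
  smul_mem' := fun c a ha i hi => by simp [ha i hi]

theorem finrank_le_finrank_inf_vanishing (R : Submodule ℝ (Vec n × Vec n)) (S : Finset (Fin n)) :
    Module.finrank ℝ R ≤ Module.finrank ℝ (R ⊓ vanishing S : Submodule ℝ _) + S.card := by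
  have h1 := finrank_le_finrank_add_card S (fun i => pairing (ex i)) (vanishing S) (by
    intro ξ h i hi
    simpa [pairing_apply, dot, ex, Pi.single_apply] using h i hi)
  have h2 := Submodule.finrank_sup_add_finrank_inf_eq R (vanishing S)
  have h3 := Submodule.finrank_le (R ⊔ vanishing S)
  omega

theorem exists_splitting_S {D : Setting n P Q} {t : ℝ} {x y : Vec n} {M : SMult n P Q}
    (h : NondegKKTAt D t x y M) :
    ∃ R S : Submodule ℝ (Vec n × Vec n), R ≤ tangentS D t x y ∧ S ≤ tangentS D t x y ∧
      Module.finrank ℝ R + Module.finrank ℝ S = Module.finrank ℝ (tangentS D t x y) ∧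
      (∀ ξ ∈ R, ξ ≠ 0 → formS D t x y M ξ ξ < 0) ∧ (∀ ξ ∈ S, ξ ≠ 0 → 0 < formS D t x y M ξ ξ) ∧
      QIdx D t x y M = Module.finrank ℝ R := by
  have hnd := h.2.2.2.2.2.2.2.2
  rw [hess_LagS] at hnd
  obtain ⟨R, S, h1, h2, h3, h4, h5⟩ := exists_negDef_posDef (formS D t x y M)
    (couplingForm_comm (secondDeriv_comm (contDiff_lagF D _ _) x) _) (tangentS D t x y) hnd
  refine ⟨R, S, h1, h2, h3, h4, h5, ?_⟩
  rw [QIdx, hess_LagS]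
  exact negIndex_eq h1 h2 h3 h4 h5

theorem exists_splitting_R {D : Setting n P Q} {x y : Vec n} {M : TMult n P Q}
    (h : NondegTStatAt D x y M) :
    ∃ R S : Submodule ℝ (Vec n × Vec n), R ≤ tangentR D x y ∧ S ≤ tangentR D x y ∧
      Module.finrank ℝ R + Module.finrank ℝ S = Module.finrank ℝ (tangentR D x y) ∧
      (∀ ξ ∈ R, ξ ≠ 0 → formR D x M ξ ξ < 0) ∧ (∀ ξ ∈ S, ξ ≠ 0 → 0 < formR D x M ξ ξ) ∧
      negIndex (hess (LagR D x y M) (x, y)) (inTR D x y) = Module.finrank ℝ R := by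
  have hnd := h.2.2.2.2.2.2
  rw [hess_LagR] at hnd
  obtain ⟨R, S, h1, h2, h3, h4, h5⟩ := exists_negDef_posDef (formR D x M)
    (couplingForm_comm (secondDeriv_comm (contDiff_lagF D _ _) x) _) (tangentR D x y) hnd
  refine ⟨R, S, h1, h2, h3, h4, h5, ?_⟩
  rw [hess_LagR]
  exact negIndex_eq h1 h2 h3 h4 h5

/-- Theorem 3, last part: under NDT6 the T-index of the limiting
nondegenerate T-stationary point equals the common quadratic index m of the
converging nondegenerate KKT points of S(t_k). -/
theorem statement15 {n : ℕ} {P Q : Type*} [Fintype P] [Fintype Q]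
    (D : Setting n P Q) (t : ℕ → ℝ) (htpos : ∀ k, 0 < t k)
    (ht0 : Filter.Tendsto t Filter.atTop (nhds 0))
    (X Y : ℕ → Vec n) (Mk : ℕ → SMult n P Q)
    (hK : ∀ k, NondegKKTAt D (t k) (X k) (Y k) (Mk k))
    (m : ℕ) (hQI : ∀ k, QIdx D (t k) (X k) (Y k) (Mk k) = m)
    (xb yb : Vec n)
    (hconv : Filter.Tendsto (fun k => ((X k, Y k) : Vec n × Vec n))
      Filter.atTop (nhds (xb, yb)))
    (Mb : TMult n P Q) (hnd : NondegTStatAt D xb yb Mb)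
    (hndt6 : ∀ i ∈ a01 xb yb, Mb.sig1 i ≠ 0) :
    TIndex D xb yb Mb = m := by
  let l : Ultrafilter ℕ := hyperfilter ℕ
  have hl : Tendsto (fun k => ((X k, Y k) : Vec n × Vec n)) l (𝓝 (xb, yb)) :=
    hconv.mono_left Nat.hyperfilter_le_atTop
  have hX : Tendsto X l (𝓝 xb) := (continuous_fst.tendsto (xb, yb)).comp hl
  have hY : Tendsto Y l (𝓝 yb) := (continuous_snd.tendsto (xb, yb)).comp hl
  have hKKT := fun k => (hK k).1
  have hA := eventually_activeLike hX hY hKKT hnd hndt6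
  have hdim : ∀ᶠ k in (l : Filter ℕ), Module.finrank ℝ (tangentR D xb yb) + (a00 xb yb).card ≤
      Module.finrank ℝ (tangentS D (t k) (X k) (Y k)) := by
    filter_upwards [hA] with k hk using hk.finrank_le (htpos k) hnd.1.1 hnd.2.1 hnd.1.sum_eq
  choose R S hR hS hRS hneg hpos hind using fun k => exists_splitting_S (hK k)
  obtain ⟨Rb, Sb, hRb, hSb, hRSb, hnegb, hposb, hindb⟩ := exists_splitting_R hnd
  have hm : ∀ k, Module.finrank ℝ (R k) = m := fun k => (hind k).symm.trans (hQI k)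
  rw [TIndex, hindb]
  refine le_antisymm ?_ ?_
  · obtain ⟨U, hU, hlim⟩ := exists_limit_submodule l S
      (Module.finrank ℝ (tangentR D xb yb) + (a00 xb yb).card - m) (by
        filter_upwards [hdim] with k hk
        have h1 := hRS k
        have h2 := hm k
        omega)
    have hUR : ∀ w ∈ U, w ∈ tangentR D xb yb ∧ 0 ≤ formR D xb Mb w w := by
      intro w hw
      obtain ⟨u, hu, huw⟩ := hlim w hw
      refine mem_tangentR_and_form_nonneg hX hY htpos hKKT hnd hA
        (hu.mono fun k hk => hS k hk) huw ?_
      filter_upwards [hu] with k hk using nonneg_of_pos_of_ne_zero (hpos k _ hk)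
    have hdisj : Disjoint U Rb := disjoint_of_forms (B := -formR D xb Mb)
      (fun ξ hξ => by simpa using (hUR ξ hξ).2) (fun ξ hξ h0 => by simpa using hnegb ξ hξ h0)
    have := finrank_add_finrank_le_of_disjoint_of_le hdisj (fun w hw => (hUR w hw).1) hRb
    omega
  · obtain ⟨U, hU, hlim⟩ := exists_limit_submodule l (fun k => R k ⊓ vanishing (a00 xb yb))
      (m - (a00 xb yb).card) (Eventually.of_forall fun k => by
        have h1 := finrank_le_finrank_inf_vanishing (R k) (a00 xb yb)
        have h2 := hm k
        omega)
    have hUR : ∀ w ∈ U, w ∈ tangentR D xb yb ∧ formR D xb Mb w w ≤ 0 := by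
      intro w hw
      obtain ⟨u, hu, huw⟩ := hlim w hw
      refine mem_tangentR_and_form_nonpos hX hY htpos (fun k => (hKKT k).2.2.2.2.2.2.2.2) hnd.1
        hnd.2.1 hA (hu.mono fun k hk => hR k hk.1) huw (hu.mono fun k hk => hk.2) ?_
      filter_upwards [hu] with k hk using nonpos_of_neg_of_ne_zero (hneg k _ hk.1)
    have hdisj : Disjoint U Sb := disjoint_of_forms (fun ξ hξ => (hUR ξ hξ).2) hposb
    have := finrank_add_finrank_le_of_disjoint_of_le hdisj (fun w hw => (hUR w hw).1) hSb
    omega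

end Scholtes
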